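/- arXiv:2001.09836 — 2 statements merged into one kernel-verified Lean document; each statement's English description precedes it below -/
import Mathlib

section
/- For every finite connected simple graph G=(V,E) with V nonempty, there exists a real number γ ∈ (0,∞) such that, almost surely with respect to the driving randomness, (#V/n)·max_{x∈V} H_{x,n} → γ and (#V/n)·min_{x∈V} H_{x,n} → γ as n → ∞. (Existence of the asymptotic growth parameter γ(G), equation (3).) -/
open MeasureTheory Filter Topology
open scoped ENNReal Classical

/-- The ballistic deposition height process on a graph `G`, started from `h0`,
driven by the sequence of chosen vertices `X`. -/
noncomputable def heightProcess {V : Type*} [Fintype V] (G : SimpleGraph V)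
    (h0 : V → ℕ) (X : ℕ → V) : ℕ → V → ℕ
  | 0 => h0
  | n + 1 => fun x =>
      if x = X n then
        1 + Finset.univ.sup (fun y =>
          if y = x ∨ G.Adj x y then heightProcess G h0 X n y else 0)
      else heightProcess G h0 X n x

/-- `X` is an i.i.d. sequence of uniformly distributed `V`-valued random variables on `(Ω, μ)`:
every finite cylinder event has the product-of-uniform probabilities. -/
def IsUniformIID {V : Type*} [Fintype V] {Ω : Type*} [MeasurableSpace Ω]
    (μ : Measure Ω) (X : ℕ → Ω → V) : Prop :=
  (∀ (n : ℕ) (v : V), MeasurableSet {ω | X n ω = v}) ∧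
  (∀ (n : ℕ) (f : ℕ → V), μ {ω | ∀ k < n, X k ω = f k} = (Fintype.card V : ℝ≥0∞)⁻¹ ^ n)

/-- `γ` is the growth rate of `G`: `γ > 0` and, for any i.i.d. uniform driving sequence,
almost surely `(#V/n) · max_x H_{x,n} → γ` and `(#V/n) · min_x H_{x,n} → γ`. -/
def IsGrowthRate {V : Type*} [Fintype V] (G : SimpleGraph V) (γ : ℝ) : Prop :=
  0 < γ ∧
  ∀ {Ω : Type} [MeasurableSpace Ω] (μ : Measure Ω) [IsProbabilityMeasure μ]
    (X : ℕ → Ω → V), IsUniformIID μ X →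
    (∀ᵐ ω ∂μ, Tendsto (fun n : ℕ =>
        (Fintype.card V : ℝ) *
          (⨆ x : V, (heightProcess G (fun _ => 0) (fun k => X k ω) n x : ℝ)) / n)
      atTop (𝓝 γ)) ∧
    (∀ᵐ ω ∂μ, Tendsto (fun n : ℕ =>
        (Fintype.card V : ℝ) *
          (⨅ x : V, (heightProcess G (fun _ => 0) (fun k => X k ω) n x : ℝ)) / n)
      atTop (𝓝 γ))

/-!
Started from the flat profile, the maximal height is subadditive and the minimal height
superadditive along the shift of the driving sequence. Cutting time into blocks of length `k` and
applying the strong law of large numbers to the blocks bounds the upper growth rate of the maximum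
by the limit of its normalised expectations, and the lower growth rate of the minimum from below
likewise. These two limits agree because the expected gap between maximum and minimum is bounded:
on a connected graph some word of length `L` raises every vertex to the old maximum, so the gap
is at most `L` after each of its occurrences, and the word occurs with positive probability
independently of the past. The common rate is positive since every deposition raises the total
height by at least one.
-/

/-- The shifted sequence `X k, X (k + 1), …`: the driving sequence as seen from time `k`. -/
def shift {α : Type*} (k : ℕ) (X : ℕ → α) : ℕ → α := fun i => X (k + i)

@[simp]
theorem shift_zero {α : Type*} (X : ℕ → α) : shift 0 X = X := by
  funext i
  simp [shift]

section Sequences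

variable {u : ℕ → ℝ}

theorem exists_forall_le_of_add_le_add_mul {c r : ℝ} {L : ℕ} (hL : 0 < L) (hr0 : 0 ≤ r)
    (hr1 : r < 1) (hu : ∀ n, u (n + L) ≤ c + r * u n) : ∃ C, ∀ n, u n ≤ C := by
  obtain ⟨B, hB⟩ := ((Finset.range L).image u).bddAbove
  have hfix : c ≤ max B (c / (1 - r)) * (1 - r) :=
    (div_le_iff₀ (sub_pos.2 hr1)).1 (le_max_right _ _)
  refine ⟨max B (c / (1 - r)), fun n => ?_⟩
  induction n using Nat.strong_induction_on with
  | _ n ih =>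
    obtain hn | hn := lt_or_ge n L
    · exact le_max_of_le_left (hB (by simpa using ⟨n, hn, rfl⟩))
    · have hstep := hu (n - L)
      rw [Nat.sub_add_cancel hn] at hstep
      have := mul_le_mul_of_nonneg_left (ih (n - L) (by omega)) hr0
      linarith

theorem tendsto_natDiv_div_atTop {k : ℕ} (hk : 0 < k) :
    Tendsto (fun n : ℕ => ((n / k : ℕ) : ℝ) / n) atTop (𝓝 (1 / k)) := by
  have hfloor := (tendsto_nat_floor_mul_div_atTop (R := ℝ) (a := 1 / k) (by positivity)).comp
    (tendsto_natCast_atTop_atTop (R := ℝ))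
  refine hfloor.congr fun n => ?_
  simp only [Function.comp_apply]
  rw [one_div, inv_mul_eq_div, Nat.floor_div_eq_div]

theorem tendsto_comp_natDiv_div_atTop {a : ℝ} {k : ℕ} (hk : 0 < k)
    (hu : Tendsto (fun q : ℕ => u q / q) atTop (𝓝 a)) :
    Tendsto (fun n : ℕ => u (n / k) / n) atTop (𝓝 (a / k)) := by
  have hmul := (hu.comp (Nat.tendsto_div_const_atTop hk.ne')).mul (tendsto_natDiv_div_atTop hk)
  rw [mul_one_div] at hmul
  refine hmul.congr' ?_
  filter_upwards [eventually_ge_atTop k] with n hn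
  have hq : ((n / k : ℕ) : ℝ) ≠ 0 := by exact_mod_cast (Nat.div_pos hn hk).ne'
  exact div_mul_div_cancel₀ hq

theorem exists_forall_frequently_eq (V : Type*) [Countable V] [Nonempty V] :
    ∃ X : ℕ → V, ∀ v, ∃ᶠ n in atTop, X n = v := by
  obtain ⟨f, hf⟩ := exists_surjective_nat V
  refine ⟨fun n => f n.unpair.1, fun v => ?_⟩
  obtain ⟨a, rfl⟩ := hf v
  exact frequently_atTop.2 fun b => ⟨Nat.pair a b, Nat.right_le_pair a b, by simp⟩

end Sequences

section FinitelyManyCoordinates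

variable {ι : Type*} {α : ι → Type*} {β : Type*} {f : (∀ i, α i) → β} {S : Finset ι}

theorem apply_updateFinset_restrict (hS : DependsOn f (S : Set ι)) (X₀ X : ∀ i, α i) :
    f (Function.updateFinset X₀ S (S.restrict X)) = f X :=
  hS fun i hi => by simp [Function.updateFinset, Finset.mem_coe.1 hi]

variable [∀ i, Nonempty (α i)] [∀ i, MeasurableSpace (α i)] [MeasurableSpace β]

theorem exists_measurable_comp_restrict (hf : Measurable f) (hS : DependsOn f (S : Set ι)) :
    ∃ φ : (∀ i : S, α i) → β, Measurable φ ∧ f = φ ∘ S.restrict := by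
  let X₀ : ∀ i, α i := fun i => Classical.arbitrary (α i)
  exact ⟨f ∘ Function.updateFinset X₀ S, hf.comp measurable_updateFinset,
    funext fun X => (apply_updateFinset_restrict hS X₀ X).symm⟩

theorem measurable_of_dependsOn [∀ i, Countable (α i)] [∀ i, MeasurableSingletonClass (α i)]
    (hS : DependsOn f (S : Set ι)) : Measurable f := by
  let X₀ : ∀ i, α i := fun i => Classical.arbitrary (α i)
  have hφ : Measurable fun y => f (Function.updateFinset X₀ S y) := measurable_of_countable _
  convert hφ.comp (Finset.measurable_restrict S) using 1
  exact funext fun X => (apply_updateFinset_restrict hS X₀ X).symm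

end FinitelyManyCoordinates

theorem dependsOn_comp_shift {α β : Type*} {f : (ℕ → α) → β} {k : ℕ}
    (hf : DependsOn f (Finset.range k : Set ℕ)) (a : ℕ) :
    DependsOn (f ∘ shift a) (Finset.Ico a (a + k) : Set ℕ) := fun X Y hXY =>
  hf fun i hi => hXY (a + i) (by simpa using hi)

theorem ext_of_initial_segments {V : Type*} [Countable V] [MeasurableSpace V]
    [MeasurableSingletonClass V] {μ ν : Measure (ℕ → V)} [IsFiniteMeasure μ]
    (h : ∀ n (w : ℕ → V), μ {X | ∀ k < n, X k = w k} = ν {X | ∀ k < n, X k = w k}) : μ = ν := by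
  have hrange (n : ℕ) :
      μ.map (Finset.range n).restrict = ν.map (Finset.range n).restrict := by
    obtain hV | hV := isEmpty_or_nonempty V
    · exact congrArg₂ _ rfl (Measure.ext_of_singleton fun X => (hV.false (X 0)).elim)
    refine Measure.ext_of_singleton fun g => ?_
    let w : ℕ → V := Function.updateFinset (fun _ => Classical.arbitrary V) (Finset.range n) g
    have hcyl : Finset.restrict (π := fun _ => V) (Finset.range n) ⁻¹' {g} =
        {X | ∀ k < n, X k = w k} := by
      ext X
      simp +contextual [funext_iff, w, Function.updateFinset]
    have hmeas := Finset.measurable_restrict (X := fun _ : ℕ => V) (Finset.range n)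
    rw [Measure.map_apply hmeas (measurableSet_singleton g),
      Measure.map_apply hmeas (measurableSet_singleton g), hcyl, h]
  have hmarginal (I : Finset ℕ) : μ.map I.restrict = ν.map I.restrict := by
    rw [← Finset.restrict₂_comp_restrict I.subset_range_sup_succ,
      ← Measure.map_map (Finset.measurable_restrict₂ _) (Finset.measurable_restrict _),
      ← Measure.map_map (Finset.measurable_restrict₂ _) (Finset.measurable_restrict _), hrange]
  exact IsProjectiveLimit.unique (P := fun I => μ.map I.restrict) (fun _ => rfl)
    fun I => (hmarginal I).symm

section IID

variable {α : Type*} [MeasurableSpace α] (ν : Measure α)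

/-- The law of a sequence of independent random variables with common distribution `ν`. -/
noncomputable abbrev iidMeasure : Measure (ℕ → α) := Measure.infinitePi fun _ : ℕ => ν

variable [IsProbabilityMeasure ν]

theorem measurePreserving_shift (k : ℕ) :
    MeasurePreserving (shift (α := α) k) (iidMeasure ν) (iidMeasure ν) where
  measurable := measurable_pi_iff.2 fun _ => measurable_pi_apply _
  map_eq := Measure.map_infinitePi_infinitePi_of_inj (P := fun _ : ℕ => ν)
    (add_right_injective k)

theorem iidMeasure_initial_segment [MeasurableSingletonClass α] (n : ℕ) (w : ℕ → α) :
    iidMeasure ν {X | ∀ k < n, X k = w k} = ∏ k ∈ Finset.range n, ν {w k} := by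
  have hbox : {X : ℕ → α | ∀ k < n, X k = w k} =
      Set.pi (Finset.range n : Set ℕ) fun k => {w k} := by
    ext X
    simp [Set.mem_pi]
  rw [hbox, Measure.infinitePi_pi _ fun _ _ => measurableSet_singleton _]

theorem indepFun_comp_shift {β γ : Type*} [MeasurableSpace β] [MeasurableSpace γ]
    {f : (ℕ → α) → β} {g : (ℕ → α) → γ} {a b k l : ℕ}
    (hf : Measurable f) (hfk : DependsOn f (Finset.range k : Set ℕ))
    (hg : Measurable g) (hgl : DependsOn g (Finset.range l : Set ℕ)) (hab : a + k ≤ b) :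
    ProbabilityTheory.IndepFun (f ∘ shift a) (g ∘ shift b) (iidMeasure ν) := by
  have : Nonempty α := nonempty_of_isProbabilityMeasure ν
  obtain ⟨φ, hφ, hfφ⟩ := exists_measurable_comp_restrict
    (hf.comp (measurePreserving_shift ν a).measurable) (dependsOn_comp_shift hfk a)
  obtain ⟨ψ, hψ, hgψ⟩ := exists_measurable_comp_restrict
    (hg.comp (measurePreserving_shift ν b).measurable) (dependsOn_comp_shift hgl b)
  have hdisj : Disjoint (Finset.Ico a (a + k)) (Finset.Ico b (b + l)) :=
    Finset.Ico_disjoint_Ico_consecutive .. |>.mono_right (Finset.Ico_subset_Ico_left hab)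
  rw [hfφ, hgψ]
  exact ((ProbabilityTheory.iIndepFun_infinitePi (P := fun _ : ℕ => ν)
    (X := fun _ x => x) fun _ => measurable_id).indepFun_finset _ _ hdisj
      fun i => measurable_pi_apply i).comp hφ hψ

theorem integral_comp_shift {f : (ℕ → α) → ℝ} (hf : AEStronglyMeasurable f (iidMeasure ν))
    (k : ℕ) :
    ∫ X, f (shift k X) ∂iidMeasure ν = ∫ X, f X ∂iidMeasure ν := by
  have hk := measurePreserving_shift ν k
  rw [← integral_map hk.measurable.aemeasurable (by rwa [hk.map_eq]), hk.map_eq]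

theorem integral_mul_comp_shift {f g : (ℕ → α) → ℝ} {k l : ℕ}
    (hf : Measurable f) (hfk : DependsOn f (Finset.range k : Set ℕ))
    (hg : Measurable g) (hgl : DependsOn g (Finset.range l : Set ℕ)) :
    ∫ X, f X * g (shift k X) ∂iidMeasure ν =
      (∫ X, f X ∂iidMeasure ν) * ∫ X, g X ∂iidMeasure ν := by
  have hindep : ProbabilityTheory.IndepFun f (g ∘ shift k) (iidMeasure ν) := by
    have := indepFun_comp_shift ν hf hfk hg hgl (Nat.zero_add k).le
    rwa [show f ∘ shift 0 = f from funext fun X => congrArg f (shift_zero X)] at this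
  have hgk := hg.comp (measurePreserving_shift ν k).measurable
  rw [← integral_comp_shift ν hg.aestronglyMeasurable k]
  exact hindep.integral_fun_mul_eq_mul_integral hf.aestronglyMeasurable hgk.aestronglyMeasurable

theorem ae_tendsto_average_blocks {f : (ℕ → α) → ℝ} {k : ℕ} (hf : Measurable f)
    (hfk : DependsOn f (Finset.range k : Set ℕ)) (hint : Integrable f (iidMeasure ν)) :
    ∀ᵐ X ∂iidMeasure ν,
      Tendsto (fun q : ℕ => (∑ i ∈ Finset.range q, f (shift (k * i) X)) / q) atTop
        (𝓝 (∫ X, f X ∂iidMeasure ν)) := by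
  have hindep {i j : ℕ} (hij : i < j) :
      ProbabilityTheory.IndepFun (f ∘ shift (k * i)) (f ∘ shift (k * j)) (iidMeasure ν) := by
    refine indepFun_comp_shift ν hf hfk hf hfk ?_
    rw [← Nat.mul_succ]
    exact Nat.mul_le_mul_left k hij
  have hident (i : ℕ) : ProbabilityTheory.IdentDistrib (f ∘ shift (k * i)) (f ∘ shift (k * 0))
      (iidMeasure ν) (iidMeasure ν) := by
    have hdistrib (j : ℕ) : ProbabilityTheory.IdentDistrib (f ∘ shift j) f
        (iidMeasure ν) (iidMeasure ν) := by
      have hshift := measurePreserving_shift ν j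
      refine ⟨(hf.comp hshift.measurable).aemeasurable, hf.aemeasurable, ?_⟩
      rw [← Measure.map_map hf hshift.measurable, hshift.map_eq]
    exact (hdistrib _).trans (hdistrib _).symm
  have hslln := ProbabilityTheory.strong_law_ae_real (fun i => f ∘ shift (k * i))
    (by simpa [Function.comp_def] using hint)
    (fun i j hij => hij.lt_or_gt.elim hindep fun h => (hindep h).symm) hident
  simpa using hslln

end IID

/-- A measurable functional of a driving sequence which, in its first `n` terms, grows at most
linearly and is subadditive along the shift: the integrand of a Kingman-type theorem. -/
structure IsSubadditiveFunctional {α : Type*} [MeasurableSpace α] (F : ℕ → (ℕ → α) → ℝ) (C : ℝ) :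
    Prop where
  measurable (n : ℕ) : Measurable (F n)
  dependsOn (n : ℕ) : DependsOn (F n) (Finset.range n : Set ℕ)
  add_le (a b : ℕ) (X : ℕ → α) : F (a + b) X ≤ F a X + F b (shift a X)
  abs_le (n : ℕ) (X : ℕ → α) : |F n X| ≤ C * n

namespace IsSubadditiveFunctional

variable {α : Type*} [MeasurableSpace α] {F G : ℕ → (ℕ → α) → ℝ} {C D : ℝ}

theorem zero_le_bound (hF : IsSubadditiveFunctional F C) (X : ℕ → α) : 0 ≤ C := by
  simpa using (abs_nonneg _).trans (hF.abs_le 1 X)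

theorem le_sum_blocks (hF : IsSubadditiveFunctional F C) (k q : ℕ) (X : ℕ → α) :
    F (k * q) X ≤ ∑ i ∈ Finset.range q, F k (shift (k * i) X) := by
  induction q with
  | zero => simpa using (le_abs_self _).trans (hF.abs_le 0 X)
  | succ q ih =>
    rw [Finset.sum_range_succ]
    exact (hF.add_le (k * q) k X).trans (by gcongr)

theorem le_sum_blocks_add (hF : IsSubadditiveFunctional F C) {k : ℕ} (hk : 0 < k) (n : ℕ)
    (X : ℕ → α) : F n X ≤ ∑ i ∈ Finset.range (n / k), F k (shift (k * i) X) + C * k := by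
  have hremainder : F (n % k) (shift (k * (n / k)) X) ≤ C * k :=
    ((le_abs_self _).trans (hF.abs_le _ _)).trans <|
      mul_le_mul_of_nonneg_left (by exact_mod_cast (Nat.mod_lt n hk).le) (hF.zero_le_bound X)
  have hsplit := hF.add_le (k * (n / k)) (n % k) X
  rw [Nat.div_add_mod] at hsplit
  exact hsplit.trans (add_le_add (hF.le_sum_blocks _ _ _) hremainder)

variable (ν : Measure α) [IsProbabilityMeasure ν]

theorem integrable (hF : IsSubadditiveFunctional F C) (n : ℕ) :
    Integrable (F n) (iidMeasure ν) :=
  .of_bound (hF.measurable n).aestronglyMeasurable (C * n) (.of_forall (hF.abs_le n))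

theorem subadditive_integral (hF : IsSubadditiveFunctional F C) :
    Subadditive fun n => ∫ X, F n X ∂iidMeasure ν := fun a b => by
  have hshift : Integrable (fun X => F b (shift a X)) (iidMeasure ν) :=
    (measurePreserving_shift ν a).integrable_comp_of_integrable (hF.integrable ν b)
  calc ∫ X, F (a + b) X ∂iidMeasure ν
      ≤ ∫ X, (F a X + F b (shift a X)) ∂iidMeasure ν :=
        integral_mono (hF.integrable ν _) ((hF.integrable ν a).add hshift) (hF.add_le a b)
    _ = (∫ X, F a X ∂iidMeasure ν) + ∫ X, F b X ∂iidMeasure ν := by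
        rw [integral_add (hF.integrable ν a) hshift, integral_comp_shift ν (hF.integrable ν b).1]

theorem bddBelow_integral_div (hF : IsSubadditiveFunctional F C) :
    BddBelow (Set.range fun n : ℕ => (∫ X, F n X ∂iidMeasure ν) / n) := by
  refine ⟨-C, Set.forall_mem_range.2 fun n => ?_⟩
  have : Nonempty (ℕ → α) := nonempty_of_isProbabilityMeasure (iidMeasure ν)
  have hC := hF.zero_le_bound (Classical.arbitrary _)
  obtain rfl | hn := n.eq_zero_or_pos
  · simpa using hC
  rw [le_div_iff₀ (by positivity)]
  have hbound : ∫ _, -(C * n) ∂iidMeasure ν ≤ ∫ X, F n X ∂iidMeasure ν :=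
    integral_mono (integrable_const _) (hF.integrable ν n) fun X => neg_le_of_abs_le (hF.abs_le n X)
  simpa using hbound

theorem tendsto_integral_div (hF : IsSubadditiveFunctional F C) :
    Tendsto (fun n : ℕ => (∫ X, F n X ∂iidMeasure ν) / n) atTop
      (𝓝 (hF.subadditive_integral ν).lim) :=
  (hF.subadditive_integral ν).tendsto_lim (hF.bddBelow_integral_div ν)

theorem ae_eventually_div_lt_of_integral_div_lt (hF : IsSubadditiveFunctional F C) {k : ℕ}
    (hk : 0 < k) :
    ∀ᵐ X ∂iidMeasure ν, ∀ c, (∫ X, F k X ∂iidMeasure ν) / k < c → ∀ᶠ n : ℕ in atTop,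
      F n X / n < c := by
  filter_upwards [ae_tendsto_average_blocks ν (hF.measurable k) (hF.dependsOn k)
    (hF.integrable ν k)] with X hX c hc
  have hmajorant : Tendsto (fun n : ℕ =>
      (∑ i ∈ Finset.range (n / k), F k (shift (k * i) X)) / n + C * k / n) atTop
      (𝓝 ((∫ X, F k X ∂iidMeasure ν) / k)) := by
    simpa using (tendsto_comp_natDiv_div_atTop hk hX).add
      (tendsto_const_div_atTop_nhds_zero_nat (C * k))
  filter_upwards [hmajorant.eventually_lt_const hc] with n hn
  rw [← add_div] at hn
  exact (div_le_div_of_nonneg_right (hF.le_sum_blocks_add hk n X) n.cast_nonneg).trans_lt hn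

theorem ae_eventually_div_lt (hF : IsSubadditiveFunctional F C) :
    ∀ᵐ X ∂iidMeasure ν, ∀ c, (hF.subadditive_integral ν).lim < c → ∀ᶠ n : ℕ in atTop,
      F n X / n < c := by
  have hblocks := ae_all_iff.2 fun k : ℕ =>
    hF.ae_eventually_div_lt_of_integral_div_lt ν k.succ_pos
  filter_upwards [hblocks] with X hX c hc
  obtain ⟨k, hkc, hk⟩ := (((hF.tendsto_integral_div ν).eventually_lt_const hc).and
    (eventually_gt_atTop 0)).exists
  obtain ⟨k, rfl⟩ := Nat.exists_eq_succ_of_ne_zero hk.ne'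
  exact hX k c hkc

theorem exists_ae_tendsto_div (hF : IsSubadditiveFunctional F C)
    (hG : IsSubadditiveFunctional (fun n X => -G n X) D) (hle : ∀ n X, G n X ≤ F n X)
    (hgap : Tendsto (fun n : ℕ => (∫ X, (F n X - G n X) ∂iidMeasure ν) / n) atTop (𝓝 0)) :
    ∃ γ, ∀ᵐ X ∂iidMeasure ν, Tendsto (fun n : ℕ => F n X / n) atTop (𝓝 γ) ∧
      Tendsto (fun n : ℕ => G n X / n) atTop (𝓝 γ) := by
  have hlim : (hF.subadditive_integral ν).lim + (hG.subadditive_integral ν).lim = 0 := by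
    refine tendsto_nhds_unique
      ((hF.tendsto_integral_div ν).add (hG.tendsto_integral_div ν)) (hgap.congr fun n => ?_)
    rw [← add_div, ← integral_add (hF.integrable ν n) (hG.integrable ν n)]
    rfl
  refine ⟨(hF.subadditive_integral ν).lim, ?_⟩
  filter_upwards [hF.ae_eventually_div_lt ν, hG.ae_eventually_div_lt ν] with X hupper hlower
  have hmono (n : ℕ) : G n X / n ≤ F n X / n :=
    div_le_div_of_nonneg_right (hle n X) n.cast_nonneg
  have hlower' (c : ℝ) (hc : c < (hF.subadditive_integral ν).lim) :
      ∀ᶠ n : ℕ in atTop, c < G n X / n := by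
    filter_upwards [hlower (-c) (by linarith)] with n hn
    rw [neg_div] at hn
    exact neg_lt_neg_iff.1 hn
  exact ⟨tendsto_order.2 ⟨fun c hc => (hlower' c hc).mono fun n hn => hn.trans_le (hmono n),
      hupper⟩,
    tendsto_order.2 ⟨hlower', fun c hc => (hupper c hc).mono fun n hn => (hmono n).trans_lt hn⟩⟩

end IsSubadditiveFunctional

section HeightProcess

variable {V : Type*} [Fintype V] {G : SimpleGraph V} {h h' : V → ℕ} {X Y : ℕ → V} {n : ℕ} {x y : V}

theorem heightProcess_succ_of_ne (hx : x ≠ X n) :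
    heightProcess G h X (n + 1) x = heightProcess G h X n x :=
  if_neg hx

theorem heightProcess_lt_succ (hy : y = X n ∨ G.Adj (X n) y) :
    heightProcess G h X n y < heightProcess G h X (n + 1) (X n) := by
  have hsup := Finset.le_sup
    (f := fun z => if z = X n ∨ G.Adj (X n) z then heightProcess G h X n z else 0)
    (Finset.mem_univ y)
  simp only [if_pos hy] at hsup
  simp only [heightProcess, if_true]
  omega

theorem exists_heightProcess_succ_eq (G : SimpleGraph V) (h : V → ℕ) (X : ℕ → V) (n : ℕ) :
    ∃ y, (y = X n ∨ G.Adj (X n) y) ∧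
      heightProcess G h X (n + 1) (X n) = heightProcess G h X n y + 1 := by
  obtain ⟨y, -, hy⟩ := Finset.exists_mem_eq_sup Finset.univ ⟨X n, Finset.mem_univ _⟩
    fun z => if z = X n ∨ G.Adj (X n) z then heightProcess G h X n z else 0
  have hsucc : heightProcess G h X (n + 1) (X n) = 1 + Finset.univ.sup fun z =>
      if z = X n ∨ G.Adj (X n) z then heightProcess G h X n z else 0 := if_pos rfl
  rw [hy] at hsucc
  by_cases hadj : y = X n ∨ G.Adj (X n) y
  · exact ⟨y, hadj, by rw [hsucc, if_pos hadj, add_comm]⟩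
  · have hpos := heightProcess_lt_succ (G := G) (h := h) (X := X) (n := n) (y := X n) (.inl rfl)
    rw [if_neg hadj] at hsucc
    exact ⟨X n, .inl rfl, by omega⟩

theorem heightProcess_monotone (G : SimpleGraph V) (h : V → ℕ) (X : ℕ → V) (x : V) :
    Monotone fun n => heightProcess G h X n x :=
  monotone_nat_of_le_succ fun n => by
    obtain rfl | hx := eq_or_ne x (X n)
    · exact (heightProcess_lt_succ (.inl rfl)).le
    · exact (heightProcess_succ_of_ne hx).ge

theorem heightProcess_congr (hXY : ∀ k < n, X k = Y k) :
    heightProcess G h X n = heightProcess G h Y n := by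
  induction n with
  | zero => rfl
  | succ n ih =>
    simp only [heightProcess, ih fun k hk => hXY k (hk.trans n.lt_succ_self), hXY n n.lt_succ_self]

theorem heightProcess_add (G : SimpleGraph V) (h : V → ℕ) (X : ℕ → V) (m n : ℕ) :
    heightProcess G h X (m + n) = heightProcess G (heightProcess G h X m) (shift m X) n := by
  induction n with
  | zero => rfl
  | succ n ih =>
    rw [← add_assoc]
    simp only [heightProcess, ih]
    rfl

theorem heightProcess_le_add_of_le_add {c : ℝ} (hc : ∀ x, (h x : ℝ) ≤ h' x + c) (X : ℕ → V)
    (n : ℕ) (x : V) : (heightProcess G h X n x : ℝ) ≤ heightProcess G h' X n x + c := by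
  induction n generalizing x with
  | zero => exact hc x
  | succ n ih =>
    obtain rfl | hx := eq_or_ne x (X n)
    · obtain ⟨y, hy, hsucc⟩ := exists_heightProcess_succ_eq G h X n
      have hlt : (heightProcess G h' X n y : ℝ) + 1 ≤ heightProcess G h' X (n + 1) (X n) := by
        exact_mod_cast heightProcess_lt_succ hy
      rw [hsucc]
      push_cast
      linarith [ih y]
    · simpa only [heightProcess_succ_of_ne hx] using ih x

theorem heightProcess_zero_le (G : SimpleGraph V) (X : ℕ → V) (n : ℕ) (x : V) :
    heightProcess G (fun _ => 0) X n x ≤ n := by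
  induction n generalizing x with
  | zero => exact le_rfl
  | succ n ih =>
    obtain rfl | hx := eq_or_ne x (X n)
    · obtain ⟨y, -, hsucc⟩ := exists_heightProcess_succ_eq G (fun _ => 0) X n
      exact hsucc.trans_le (Nat.succ_le_succ (ih y))
    · exact (heightProcess_succ_of_ne hx).trans_le ((ih x).trans n.le_succ)

theorem le_sum_heightProcess (G : SimpleGraph V) (h : V → ℕ) (X : ℕ → V) (n : ℕ) :
    n ≤ ∑ x, heightProcess G h X n x := by
  induction n with
  | zero => exact Nat.zero_le _
  | succ n ih =>
    exact Nat.succ_le_of_lt <| ih.trans_lt <| Finset.sum_lt_sum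
      (fun x _ => heightProcess_monotone G h X x n.le_succ)
      ⟨X n, Finset.mem_univ _, heightProcess_lt_succ (.inl rfl)⟩

end HeightProcess

section Extrema

variable {V : Type*} [Fintype V] (G : SimpleGraph V) (n : ℕ) (X : ℕ → V)

/-- The maximal height at time `n` of the process started from the flat profile; real-valued, as
in the definition of the growth rate. -/
noncomputable def maxHeight : ℝ := ⨆ x, (heightProcess G (fun _ => 0) X n x : ℝ)

/-- The minimal height at time `n` of the process started from the flat profile; real-valued, as
in the definition of the growth rate. -/
noncomputable def minHeight : ℝ := ⨅ x, (heightProcess G (fun _ => 0) X n x : ℝ)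

theorem heightProcess_le_maxHeight (x : V) :
    (heightProcess G (fun _ => 0) X n x : ℝ) ≤ maxHeight G n X :=
  le_ciSup (Finite.bddAbove_range fun x => (heightProcess G (fun _ => 0) X n x : ℝ)) x

theorem minHeight_le_heightProcess (x : V) :
    minHeight G n X ≤ (heightProcess G (fun _ => 0) X n x : ℝ) :=
  ciInf_le (Finite.bddBelow_range fun x => (heightProcess G (fun _ => 0) X n x : ℝ)) x

theorem minHeight_nonneg : 0 ≤ minHeight G n X := Real.iInf_nonneg fun _ => Nat.cast_nonneg _

theorem maxHeight_le : maxHeight G n X ≤ n :=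
  Real.iSup_le (fun x => by exact_mod_cast heightProcess_zero_le G X n x) n.cast_nonneg

theorem le_card_mul_maxHeight : (n : ℝ) ≤ Fintype.card V * maxHeight G n X :=
  calc (n : ℝ) ≤ ∑ x, (heightProcess G (fun _ => 0) X n x : ℝ) := by
        exact_mod_cast le_sum_heightProcess G _ X n
    _ ≤ ∑ _x : V, maxHeight G n X :=
        Finset.sum_le_sum fun x _ => heightProcess_le_maxHeight G n X x
    _ = Fintype.card V * maxHeight G n X := by simp

theorem dependsOn_maxHeight : DependsOn (maxHeight G n) (Finset.range n : Set ℕ) :=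
  fun X Y hXY => by
    simp only [maxHeight, heightProcess_congr fun k hk => hXY k (by simpa using hk)]

theorem dependsOn_minHeight : DependsOn (minHeight G n) (Finset.range n : Set ℕ) :=
  fun X Y hXY => by
    simp only [minHeight, heightProcess_congr fun k hk => hXY k (by simpa using hk)]

variable [Nonempty V]

theorem minHeight_le_maxHeight : minHeight G n X ≤ maxHeight G n X :=
  (minHeight_le_heightProcess G n X (Classical.arbitrary V)).trans
    (heightProcess_le_maxHeight G n X _)

theorem maxHeight_add_le (m : ℕ) :
    maxHeight G (m + n) X ≤ maxHeight G m X + maxHeight G n (shift m X) :=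
  ciSup_le fun x => by
    rw [heightProcess_add]
    have hcompare := heightProcess_le_add_of_le_add (G := G) (h' := fun _ => 0)
      (fun x => by simpa using heightProcess_le_maxHeight G m X x) (shift m X) n x
    linarith [heightProcess_le_maxHeight G n (shift m X) x]

theorem minHeight_add_minHeight_shift_le (m : ℕ) :
    minHeight G m X + minHeight G n (shift m X) ≤ minHeight G (m + n) X :=
  le_ciInf fun x => by
    rw [heightProcess_add]
    have hcompare := heightProcess_le_add_of_le_add (G := G) (h := fun _ => 0)
      (h' := heightProcess G (fun _ => 0) X m) (c := -minHeight G m X)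
      (fun x => by simpa using minHeight_le_heightProcess G m X x) (shift m X) n x
    linarith [minHeight_le_heightProcess G n (shift m X) x]

variable [MeasurableSpace V] [MeasurableSingletonClass V]

theorem isSubadditiveFunctional_maxHeight : IsSubadditiveFunctional (maxHeight G) 1 where
  measurable n := measurable_of_dependsOn (dependsOn_maxHeight G n)
  dependsOn := dependsOn_maxHeight G
  add_le a b X := maxHeight_add_le G b X a
  abs_le n X := by
    rw [abs_of_nonneg ((minHeight_nonneg G n X).trans (minHeight_le_maxHeight G n X)), one_mul]
    exact maxHeight_le G n X

theorem isSubadditiveFunctional_neg_minHeight :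
    IsSubadditiveFunctional (fun n X => -minHeight G n X) 1 where
  measurable n := (measurable_of_dependsOn (dependsOn_minHeight G n)).neg
  dependsOn n X Y hXY := congrArg Neg.neg (dependsOn_minHeight G n hXY)
  add_le a b X := by linarith [minHeight_add_minHeight_shift_le G b X a]
  abs_le n X := by
    rw [abs_neg, abs_of_nonneg (minHeight_nonneg G n X), one_mul]
    exact (minHeight_le_maxHeight G n X).trans (maxHeight_le G n X)

end Extrema

theorem inv_card_le_of_tendsto_maxHeight_div {V : Type*} [Fintype V] [Nonempty V]
    {G : SimpleGraph V} {X : ℕ → V} {γ : ℝ}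
    (hX : Tendsto (fun n : ℕ => maxHeight G n X / n) atTop (𝓝 γ)) :
    (Fintype.card V : ℝ)⁻¹ ≤ γ := by
  refine ge_of_tendsto hX ?_
  filter_upwards [eventually_gt_atTop 0] with n hn
  have hcard : (0 : ℝ) < Fintype.card V := by exact_mod_cast Fintype.card_pos
  have hn' : (0 : ℝ) < n := by exact_mod_cast hn
  rw [le_div_iff₀ hn', inv_mul_le_iff₀ hcard]
  exact le_card_mul_maxHeight G n X

section Synchronization

variable {V : Type*} [Fintype V] {G : SimpleGraph V} {L : ℕ} {X : ℕ → V}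

/-- The first `L` terms of `X` lift every vertex at least to the initial maximum, whatever the
initial profile; such a word brings the minimal height back up to the earlier maximal height. -/
def IsSynchronizing (G : SimpleGraph V) (L : ℕ) (X : ℕ → V) : Prop :=
  ∀ (h : V → ℕ) (y x : V), h y ≤ heightProcess G h X L x

theorem dependsOn_isSynchronizing (G : SimpleGraph V) (L : ℕ) :
    DependsOn (IsSynchronizing G L) (Finset.range L : Set ℕ) := fun X Y hXY => by
  simp only [IsSynchronizing, heightProcess_congr fun k hk => hXY k (by simpa using hk)]

theorem eventually_le_heightProcess_of_reachable (hX : ∀ v, ∃ᶠ n in atTop, X n = v) {x y : V}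
    (hyx : G.Reachable y x) : ∀ᶠ n in atTop, ∀ h : V → ℕ, h y ≤ heightProcess G h X n x := by
  rw [SimpleGraph.reachable_iff_reflTransGen] at hyx
  induction hyx with
  | refl => exact .of_forall fun n h => heightProcess_monotone G h X y n.zero_le
  | @tail z x _ hzx ih =>
    obtain ⟨n, rfl, hn⟩ := ((hX x).and_eventually ih).exists
    filter_upwards [eventually_gt_atTop n] with m hm h
    calc h y ≤ heightProcess G h X n z := hn h
      _ ≤ heightProcess G h X (n + 1) (X n) := (heightProcess_lt_succ (.inr hzx.symm)).le
      _ ≤ heightProcess G h X m (X n) := heightProcess_monotone G h X (X n) hm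

theorem eventually_isSynchronizing (hG : G.Connected) (hX : ∀ v, ∃ᶠ n in atTop, X n = v) :
    ∀ᶠ L in atTop, IsSynchronizing G L X := by
  have hall : ∀ᶠ L in atTop, ∀ y x, ∀ h : V → ℕ, h y ≤ heightProcess G h X L x :=
    eventually_all.2 fun y => eventually_all.2 fun x =>
      eventually_le_heightProcess_of_reachable hX (hG.preconnected y x)
  exact hall.mono fun L hL h y x => hL y x h

/-- The spread of the height profile at time `n`; its mean decides whether the extremal heights
grow at the same rate. -/
noncomputable def heightGap (G : SimpleGraph V) (n : ℕ) (X : ℕ → V) : ℝ :=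
  maxHeight G n X - minHeight G n X

theorem dependsOn_heightGap (G : SimpleGraph V) (n : ℕ) :
    DependsOn (heightGap G n) (Finset.range n : Set ℕ) := fun X Y hXY => by
  simp only [heightGap, dependsOn_maxHeight G n hXY, dependsOn_minHeight G n hXY]

variable [Nonempty V]

theorem IsSynchronizing.maxHeight_le_minHeight {n : ℕ} (hX : IsSynchronizing G L (shift n X)) :
    maxHeight G n X ≤ minHeight G (n + L) X :=
  ciSup_le fun y => le_ciInf fun x => by
    rw [heightProcess_add]
    exact_mod_cast hX _ y x

theorem heightGap_add_le (G : SimpleGraph V) (L n : ℕ) (X : ℕ → V) :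
    heightGap G (n + L) X ≤
      L + heightGap G n X * {Y | ¬IsSynchronizing G L Y}.indicator 1 (shift n X) := by
  unfold heightGap
  have hmax := maxHeight_add_le G L X n
  have hmax_le := maxHeight_le G L (shift n X)
  by_cases hX : IsSynchronizing G L (shift n X)
  · rw [Set.indicator_of_notMem (by simpa using hX)]
    linarith [hX.maxHeight_le_minHeight]
  · rw [Set.indicator_of_mem (by simpa using hX), Pi.one_apply]
    linarith [minHeight_add_minHeight_shift_le G L X n, minHeight_nonneg G L (shift n X)]

end Synchronization

section Growth

variable {V : Type*} [Fintype V] [MeasurableSpace V] [MeasurableSingletonClass V]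
  {G : SimpleGraph V} (ν : Measure V) [IsProbabilityMeasure ν]

theorem exists_probReal_not_isSynchronizing_lt_one (hG : G.Connected) (hν : ∀ v, ν {v} ≠ 0) :
    ∃ L, 0 < L ∧ (iidMeasure ν).real {X | ¬IsSynchronizing G L X} < 1 := by
  have := hG.nonempty
  obtain ⟨w, hw⟩ := exists_forall_frequently_eq V
  obtain ⟨L, hLw, hL⟩ := ((eventually_isSynchronizing hG hw).and (eventually_gt_atTop 0)).exists
  have hmeas : MeasurableSet {X : ℕ → V | IsSynchronizing G L X} :=
    measurableSet_setOfPred.2 (measurable_of_dependsOn (dependsOn_isSynchronizing G L))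
  have hcylinder : {X | ∀ k < L, X k = w k} ⊆ {X | IsSynchronizing G L X} := fun X hX =>
    (dependsOn_isSynchronizing G L fun k hk => hX k (by simpa using hk)).mpr hLw
  have hne : iidMeasure ν {X | ∀ k < L, X k = w k} ≠ 0 := by
    rw [iidMeasure_initial_segment]
    exact Finset.prod_ne_zero_iff.2 fun k _ => hν (w k)
  have hpos : 0 < (iidMeasure ν).real {X | IsSynchronizing G L X} :=
    ENNReal.toReal_pos (fun h => hne (measure_mono_null hcylinder h)) (measure_ne_top _ _)
  have hcompl := probReal_compl_eq_one_sub (μ := iidMeasure ν) hmeas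
  exact ⟨L, hL, by simpa only [← Set.compl_ofPred] using hcompl.trans_lt (sub_lt_self 1 hpos)⟩

theorem integrable_heightGap [Nonempty V] (G : SimpleGraph V) (n : ℕ) :
    Integrable (heightGap G n) (iidMeasure ν) :=
  (((isSubadditiveFunctional_maxHeight G).integrable ν n).add
    ((isSubadditiveFunctional_neg_minHeight G).integrable ν n)).congr
      (.of_forall fun _ => (sub_eq_add_neg _ _).symm)

theorem integral_heightGap_add_le [Nonempty V] (G : SimpleGraph V) (L n : ℕ) :
    ∫ X, heightGap G (n + L) X ∂iidMeasure ν ≤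
      L + (iidMeasure ν).real {X | ¬IsSynchronizing G L X} *
        ∫ X, heightGap G n X ∂iidMeasure ν := by
  let failure : (ℕ → V) → ℝ := {X | ¬IsSynchronizing G L X}.indicator 1
  have hfailure_dep : DependsOn failure (Finset.range L : Set ℕ) := fun X Y hXY => by
    simp only [failure, Set.indicator, Set.mem_ofPred_eq, dependsOn_isSynchronizing G L hXY,
      Pi.one_apply]
  have hfailure_meas := measurable_of_dependsOn hfailure_dep
  have hfailure_event : MeasurableSet {X : ℕ → V | ¬IsSynchronizing G L X} :=
    (measurableSet_setOfPred.2 (measurable_of_dependsOn (dependsOn_isSynchronizing G L))).compl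
  have hproduct_int : Integrable (fun X => heightGap G n X * failure (shift n X))
      (iidMeasure ν) := by
    refine (integrable_heightGap ν G n).mul_bdd (c := 1)
      (hfailure_meas.comp (measurePreserving_shift ν n).measurable).aestronglyMeasurable
      (.of_forall fun _ => ?_)
    exact (norm_indicator_le_norm_self _ _).trans_eq (by simp)
  calc ∫ X, heightGap G (n + L) X ∂iidMeasure ν
      ≤ ∫ X, (L + heightGap G n X * failure (shift n X)) ∂iidMeasure ν :=
        integral_mono (integrable_heightGap ν G _) ((integrable_const _).add hproduct_int)
          (heightGap_add_le G L n)
    _ = L + (∫ X, heightGap G n X ∂iidMeasure ν) * ∫ X, failure X ∂iidMeasure ν := by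
        have hdep := dependsOn_heightGap G n
        rw [integral_add (integrable_const _) hproduct_int, integral_mul_comp_shift ν
          (measurable_of_dependsOn hdep) hdep hfailure_meas hfailure_dep]
        simp
    _ = _ := by rw [integral_indicator_one hfailure_event, mul_comm]

theorem tendsto_integral_heightGap_div (hG : G.Connected) (hν : ∀ v, ν {v} ≠ 0) :
    Tendsto (fun n : ℕ => (∫ X, heightGap G n X ∂iidMeasure ν) / n) atTop (𝓝 0) := by
  have := hG.nonempty
  obtain ⟨L, hL, hlt⟩ := exists_probReal_not_isSynchronizing_lt_one ν hG hν
  obtain ⟨C, hC⟩ := exists_forall_le_of_add_le_add_mul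
    (u := fun n => ∫ X, heightGap G n X ∂iidMeasure ν) hL measureReal_nonneg hlt
    (integral_heightGap_add_le ν G L)
  have hnonneg (n : ℕ) : 0 ≤ ∫ X, heightGap G n X ∂iidMeasure ν :=
    integral_nonneg fun X => sub_nonneg.2 (minHeight_le_maxHeight G n X)
  exact squeeze_zero (fun n => div_nonneg (hnonneg n) n.cast_nonneg)
    (fun n => div_le_div_of_nonneg_right (hC n) n.cast_nonneg)
    (tendsto_const_div_atTop_nhds_zero_nat C)

theorem stmt0_general (hG : G.Connected) (hν : ∀ v, ν {v} ≠ 0) :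
    ∃ γ > 0, ∀ᵐ X ∂iidMeasure ν, Tendsto (fun n : ℕ => maxHeight G n X / n) atTop (𝓝 γ) ∧
      Tendsto (fun n : ℕ => minHeight G n X / n) atTop (𝓝 γ) := by
  have := hG.nonempty
  obtain ⟨γ, hγ⟩ := (isSubadditiveFunctional_maxHeight G).exists_ae_tendsto_div ν
    (isSubadditiveFunctional_neg_minHeight G) (fun n X => minHeight_le_maxHeight G n X)
    (tendsto_integral_heightGap_div ν hG hν)
  obtain ⟨X, hX, -⟩ := hγ.exists
  have hcard : (0 : ℝ) < (Fintype.card V : ℝ)⁻¹ := by positivity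
  exact ⟨γ, hcard.trans_le (inv_card_le_of_tendsto_maxHeight_div hX), hγ⟩

end Growth

namespace IsUniformIID

variable {V : Type*} [Fintype V] [MeasurableSpace V]
  {Ω : Type*} [MeasurableSpace Ω] {μ : Measure Ω} {X : ℕ → Ω → V}

theorem measurable (hX : IsUniformIID μ X) : Measurable fun ω k => X k ω :=
  measurable_pi_iff.2 fun k => measurable_to_countable' (hX.1 k)

theorem map_eq_iidMeasure [MeasurableSingletonClass V] [Nonempty V] [IsFiniteMeasure μ]
    (hX : IsUniformIID μ X) :
    μ.map (fun ω k => X k ω) = iidMeasure (ProbabilityTheory.uniformOn Set.univ) :=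
  ext_of_initial_segments fun n w => by
    have hsegment : MeasurableSet {Y : ℕ → V | ∀ k < n, Y k = w k} := by measurability
    rw [Measure.map_apply hX.measurable hsegment, iidMeasure_initial_segment]
    simpa [ProbabilityTheory.uniformOn_univ] using hX.2 n w

end IsUniformIID

theorem isGrowthRate_card_mul {V : Type*} [Fintype V] [Nonempty V] [MeasurableSpace V]
    [MeasurableSingletonClass V] {G : SimpleGraph V} {γ : ℝ} (hγ : 0 < γ)
    (hlim : ∀ᵐ X ∂iidMeasure (ProbabilityTheory.uniformOn (Set.univ : Set V)),
      Tendsto (fun n : ℕ => maxHeight G n X / n) atTop (𝓝 γ) ∧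
      Tendsto (fun n : ℕ => minHeight G n X / n) atTop (𝓝 γ)) :
    IsGrowthRate G (Fintype.card V * γ) := by
  refine ⟨by positivity, fun μ _ X hX => ?_⟩
  rw [← hX.map_eq_iidMeasure] at hlim
  have hlimX := ae_of_ae_map hX.measurable.aemeasurable hlim
  refine ⟨hlimX.mono fun ω hω => ?_, hlimX.mono fun ω hω => ?_⟩
  · simpa only [mul_div_assoc, maxHeight] using hω.1.const_mul (Fintype.card V : ℝ)
  · simpa only [mul_div_assoc, minHeight] using hω.2.const_mul (Fintype.card V : ℝ)

theorem stmt0 {V : Type} [Fintype V] [Nonempty V] (G : SimpleGraph V)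
    (hG : G.Connected) : ∃ γ : ℝ, IsGrowthRate G γ := by
  let : MeasurableSpace V := ⊤
  obtain ⟨γ, hγ, hlim⟩ := stmt0_general (ProbabilityTheory.uniformOn Set.univ) hG
    fun v => by simp [ProbabilityTheory.uniformOn_univ]
  exact ⟨_, isGrowthRate_card_mul hγ hlim⟩
end

section
/- Let N ≥ 0, n ≥ 1 and m ≥ 2 with m even, and N ≥ 1 if m = 2. Let G be the graph with vertex set V = ({1,…,n} × {0,…,m−1}) ∪ {x_1,…,x_N}, where (i,j) and (i',j') are adjacent if and only if they are distinct and j' ≢ j + m/2 (mod m), and each x_i is adjacent to every other vertex of V. (This is the graph obtained from the complete graph K_m minus a perfect matching by cloning every vertex n−1 times and adding N dominant vertices; #V = N + nm.) Set κ := #V/(2n) and τ := (√(κ²−1) − κ + 1)^{−1}. Then G has growth rate γ(G) = #V − (n²m/#V) · τ/(τ + 1/(2κ)). -/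
open MeasureTheory Filter Topology
open scoped ENNReal Classical

/-- The graph obtained from the "cocktail party" graph `R_m` (complete graph on `m` vertices
minus a perfect matching, `m` even) by cloning every vertex `n − 1` times and adding `N`
dominant vertices: vertices `(i,j)` and `(i',j')` are adjacent iff they are distinct and
`j' ≢ j + m/2 (mod m)`, and each of the `N` extra vertices is adjacent to everything else. -/
def cloneGraph (N n m : ℕ) : SimpleGraph ((Fin n × Fin m) ⊕ Fin N) :=
  SimpleGraph.fromRel fun a b =>
    match a, b with
    | Sum.inl (_, j), Sum.inl (_, j') => ¬ ((j' : ℕ) % m = ((j : ℕ) + m / 2) % m)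
    | _, _ => True

/-!
Let `Φ` be a function of the heights that differs from the greatest height by a bounded amount and
whose expected increment is the same from every configuration. Subtracting that drift turns `Φ`
into a martingale with bounded increments, so `Φ`, and with it the greatest height, grows linearly
at the speed of the drift. On a connected graph the least height follows: almost surely every vertex
is chosen in each time window `[ρt, t)` with `ρ < 1` and `t` large, and a chosen vertex overtakes
the earlier heights of its neighbours, so along a path every vertex overtakes an earlier greatest
height.

For the clone graph, at most one block of clones is ahead of all other vertices. Its lead `D` grows
by one when the block is chosen, drops by one if `D > 0` and the opposite block is chosen, and
becomes `0` or `1` upon any other choice. The greatest height grows except in the second case. With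
`r = κ - √(κ² - 1)`, the root in `(0, 1)` of `1 + r² = 2κr`, and `b = 1 / (2√(κ² - 1))`, the
potential `Φ = max H + b * r ^ D` has constant drift.
-/

section BoundedMartingale

variable {Ω : Type*} {mΩ : MeasurableSpace Ω} {μ : Measure Ω}

theorem ae_tendsto_zero_of_summable_integral {f : ℕ → Ω → ℝ} (hf : ∀ n, Integrable (f n) μ)
    (hf0 : ∀ n ω, 0 ≤ f n ω) (hsum : Summable fun n => ∫ ω, f n ω ∂μ) :
    ∀ᵐ ω ∂μ, Tendsto (fun n => f n ω) atTop (𝓝 0) := by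
  have hnorm (n : ℕ) : eLpNorm (f n) 1 μ = ENNReal.ofReal (∫ ω, f n ω ∂μ) := by
    rw [eLpNorm_one_eq_lintegral_enorm,
      ofReal_integral_eq_lintegral_ofReal (hf n) (ae_of_all _ (hf0 n))]
    simp only [Real.enorm_of_nonneg (hf0 n _)]
  have hfin : ∑' n, eLpNorm (f n) 1 μ ≠ ∞ := by
    simpa only [hnorm] using hsum.tsum_ofReal_ne_top
  filter_upwards [summable_norm_of_tsum_eLpNorm_ne_top le_rfl
    (fun n => (hf n).aestronglyMeasurable) hfin] with ω hω
  exact tendsto_zero_iff_norm_tendsto_zero.2 hω.tendsto_atTop_zero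

variable {M : ℕ → Ω → ℝ} {C : ℝ}

theorem ae_abs_le_mul_of_abs_sub_le (h0 : M 0 = 0)
    (hC : ∀ n, ∀ᵐ ω ∂μ, |M (n + 1) ω - M n ω| ≤ C) (n : ℕ) : ∀ᵐ ω ∂μ, |M n ω| ≤ n * C := by
  induction n with
  | zero => simp [h0]
  | succ n ih =>
    filter_upwards [ih, hC n] with ω hn hsub
    calc |M (n + 1) ω| = |M n ω + (M (n + 1) ω - M n ω)| := by rw [add_sub_cancel]
      _ ≤ n * C + C := (abs_add_le _ _).trans (add_le_add hn hsub)
      _ = (n + 1 : ℕ) * C := by push_cast; ring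

theorem ae_norm_pow_le_of_abs_sub_le (h0 : M 0 = 0)
    (hC : ∀ n, ∀ᵐ ω ∂μ, |M (n + 1) ω - M n ω| ≤ C) (n p : ℕ) :
    ∀ᵐ ω ∂μ, ‖M n ω ^ p‖ ≤ (n * C) ^ p := by
  filter_upwards [ae_abs_le_mul_of_abs_sub_le h0 hC n] with ω hω
  rw [norm_pow]
  exact pow_le_pow_left₀ (norm_nonneg _) hω p

variable [IsProbabilityMeasure μ] {ℱ : Filtration ℕ mΩ}

theorem integral_mul_martingale_sub_eq_zero (hM : Martingale M ℱ μ) {n : ℕ} {f : Ω → ℝ}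
    (hf : StronglyMeasurable[ℱ n] f) {c : ℝ} (hfc : ∀ᵐ ω ∂μ, ‖f ω‖ ≤ c) :
    ∫ ω, f ω * (M (n + 1) ω - M n ω) ∂μ = 0 := by
  have hincr : μ[M (n + 1) - M n | ℱ n] =ᵐ[μ] 0 := by
    filter_upwards [condExp_sub (hM.integrable (n + 1)) (hM.integrable n) (ℱ n),
      hM.condExp_ae_eq n.le_succ, hM.condExp_ae_eq (le_refl n)] with ω hsub hsucc hn
    simp [hsub, hsucc, hn]
  have hpull := condExp_stronglyMeasurable_mul_of_bound (ℱ.le n) hf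
    ((hM.integrable (n + 1)).sub (hM.integrable n)) c hfc
  calc ∫ ω, f ω * (M (n + 1) ω - M n ω) ∂μ
      = ∫ ω, (μ[f * (M (n + 1) - M n) | ℱ n]) ω ∂μ := (integral_condExp (ℱ.le n)).symm
    _ = ∫ _, (0 : ℝ) ∂μ := integral_congr_ae <| by
        filter_upwards [hpull, hincr] with ω hω h0
        simp [hω, h0]
    _ = 0 := integral_zero _ _

theorem integrable_martingale_pow (hM : Martingale M ℱ μ) (h0 : M 0 = 0)
    (hC : ∀ n, ∀ᵐ ω ∂μ, |M (n + 1) ω - M n ω| ≤ C) (n p : ℕ) :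
    Integrable (fun ω => M n ω ^ p) μ :=
  .of_bound ((hM.integrable n).aestronglyMeasurable.pow p) _
    (ae_norm_pow_le_of_abs_sub_le h0 hC n p)

theorem integral_le_integral_of_le_add_mul_martingale_sub (hM : Martingale M ℱ μ) (h0 : M 0 = 0)
    (hC : ∀ n, ∀ᵐ ω ∂μ, |M (n + 1) ω - M n ω| ≤ C) {n : ℕ} (p : ℕ) (a : ℝ) {f g : Ω → ℝ}
    (hf : Integrable f μ) (hg : Integrable g μ)
    (hfg : ∀ᵐ ω ∂μ, f ω ≤ g ω + a * (M n ω ^ p * (M (n + 1) ω - M n ω))) :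
    ∫ ω, f ω ∂μ ≤ ∫ ω, g ω ∂μ := by
  have hpow := ae_norm_pow_le_of_abs_sub_le h0 hC n p
  have hint : Integrable (fun ω => M n ω ^ p * (M (n + 1) ω - M n ω)) μ :=
    ((hM.integrable (n + 1)).sub (hM.integrable n)).bdd_mul
      ((hM.integrable n).aestronglyMeasurable.pow p) hpow
  have hzero : ∫ ω, M n ω ^ p * (M (n + 1) ω - M n ω) ∂μ = 0 :=
    integral_mul_martingale_sub_eq_zero hM ((hM.stronglyMeasurable n).pow p) hpow
  calc ∫ ω, f ω ∂μ ≤ ∫ ω, (g ω + a * (M n ω ^ p * (M (n + 1) ω - M n ω))) ∂μ :=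
        integral_mono_ae hf (hg.add (hint.const_mul a)) hfg
    _ = ∫ ω, g ω ∂μ := by
        rw [integral_add hg (hint.const_mul a), integral_const_mul, hzero, mul_zero, add_zero]

theorem integral_martingale_sq_le (hM : Martingale M ℱ μ) (h0 : M 0 = 0)
    (hC : ∀ n, ∀ᵐ ω ∂μ, |M (n + 1) ω - M n ω| ≤ C) (n : ℕ) :
    ∫ ω, M n ω ^ 2 ∂μ ≤ n * C ^ 2 := by
  induction n with
  | zero => simp [h0]
  | succ n ih =>
    have hint := integrable_martingale_pow hM h0 hC
    calc ∫ ω, M (n + 1) ω ^ 2 ∂μ ≤ ∫ ω, (M n ω ^ 2 + C ^ 2) ∂μ := by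
          refine integral_le_integral_of_le_add_mul_martingale_sub (n := n) hM h0 hC 1 2
            (hint (n + 1) 2) ((hint n 2).add (integrable_const _)) ?_
          filter_upwards [hC n] with ω hω
          have hsq := sq_le_sq.2 (hω.trans (le_abs_self C))
          linear_combination hsq
      _ = ∫ ω, M n ω ^ 2 ∂μ + C ^ 2 := by
          rw [integral_add (hint n 2) (integrable_const _)]; simp
      _ ≤ (n + 1 : ℕ) * C ^ 2 := by push_cast; linarith

theorem integral_martingale_pow_four_le (hM : Martingale M ℱ μ) (h0 : M 0 = 0)
    (hC : ∀ n, ∀ᵐ ω ∂μ, |M (n + 1) ω - M n ω| ≤ C) (n : ℕ) :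
    ∫ ω, M n ω ^ 4 ∂μ ≤ 4 * C ^ 4 * n ^ 2 := by
  induction n with
  | zero => simp [h0]
  | succ n ih =>
    have hint := integrable_martingale_pow hM h0 hC
    have hint2 := (hint n 2).const_mul (8 * C ^ 2)
    have hsum : Integrable (fun ω => M n ω ^ 4 + 8 * C ^ 2 * M n ω ^ 2) μ := (hint n 4).add hint2
    calc ∫ ω, M (n + 1) ω ^ 4 ∂μ
        ≤ ∫ ω, (M n ω ^ 4 + 8 * C ^ 2 * M n ω ^ 2 + 3 * C ^ 4) ∂μ := by
          refine integral_le_integral_of_le_add_mul_martingale_sub (n := n) hM h0 hC 3 4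
            (hint (n + 1) 4) (hsum.add (integrable_const _)) ?_
          filter_upwards [hC n] with ω hω
          set s := M n ω
          set d := M (n + 1) ω - s with hd
          have hsq : d ^ 2 ≤ C ^ 2 := sq_le_sq.2 (hω.trans (le_abs_self C))
          have hsq' : (d ^ 2) ^ 2 ≤ (C ^ 2) ^ 2 := pow_le_pow_left₀ (sq_nonneg d) hsq 2
          have hcross : s ^ 2 * d ^ 2 ≤ s ^ 2 * C ^ 2 := by gcongr
          have hcube : 0 ≤ d ^ 2 * (s - d) ^ 2 := by positivity
          rw [show M (n + 1) ω = s + d by rw [hd, add_sub_cancel]]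
          linear_combination 8 * hcross + 3 * hsq' + 2 * hcube
      _ = ∫ ω, M n ω ^ 4 ∂μ + 8 * C ^ 2 * ∫ ω, M n ω ^ 2 ∂μ + 3 * C ^ 4 := by
          rw [integral_add hsum (integrable_const _), integral_add (hint n 4) hint2,
            integral_const_mul]
          simp
      _ ≤ 4 * C ^ 4 * n ^ 2 + 8 * C ^ 2 * (n * C ^ 2) + 3 * C ^ 4 := by
          gcongr
          exact integral_martingale_sq_le hM h0 hC n
      _ ≤ 4 * C ^ 4 * (n + 1 : ℕ) ^ 2 := by
          have : 0 ≤ C ^ 4 := by positivity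
          push_cast
          linear_combination this

theorem ae_tendsto_martingale_div_atTop_zero (hM : Martingale M ℱ μ) (h0 : M 0 = 0)
    (hC : ∀ n, ∀ᵐ ω ∂μ, |M (n + 1) ω - M n ω| ≤ C) :
    ∀ᵐ ω ∂μ, Tendsto (fun n => M n ω / n) atTop (𝓝 0) := by
  have hint (n : ℕ) : Integrable (fun ω => (M n ω / n) ^ 4) μ := by
    simpa only [div_pow] using (integrable_martingale_pow hM h0 hC n 4).div_const _
  have hmoment (n : ℕ) : ∫ ω, (M n ω / n) ^ 4 ∂μ ≤ 4 * C ^ 4 * (1 / (n : ℝ) ^ 2) := by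
    simp only [div_pow, integral_div]
    rcases eq_or_ne n 0 with rfl | hn
    · simp
    · calc (∫ ω, M n ω ^ 4 ∂μ) / (n : ℝ) ^ 4 ≤ 4 * C ^ 4 * n ^ 2 / (n : ℝ) ^ 4 := by
            gcongr
            exact integral_martingale_pow_four_le hM h0 hC n
        _ = 4 * C ^ 4 * (1 / (n : ℝ) ^ 2) := by field_simp
  have hsum : Summable fun n : ℕ => ∫ ω, (M n ω / n) ^ 4 ∂μ :=
    .of_nonneg_of_le (fun n => integral_nonneg fun ω => by positivity) hmoment
      ((Real.summable_one_div_nat_pow.2 one_lt_two).mul_left _)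
  filter_upwards [ae_tendsto_zero_of_summable_integral hint (fun n ω => by positivity) hsum]
    with ω hω
  have hroot := hω.rpow_const (p := ((4 : ℕ) : ℝ)⁻¹) (Or.inr (by positivity))
  rw [Real.zero_rpow (by norm_num)] at hroot
  refine (tendsto_zero_iff_abs_tendsto_zero _).2 (hroot.congr fun n => ?_)
  rw [← Even.pow_abs (by decide), Real.pow_rpow_inv_natCast (abs_nonneg _) four_ne_zero]
  rfl

end BoundedMartingale

section UniformDriver

open ProbabilityTheory

variable {Ω V : Type*} {m mΩ : MeasurableSpace Ω} {μ : Measure Ω} {X : ℕ → Ω → V}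

/-- The first `n` terms of the sequence `X`, as a random element of `Fin n → V`. -/
def past (X : ℕ → Ω → V) (n : ℕ) (ω : Ω) : Fin n → V := fun i => X i ω

theorem exists_eq_comp_past {S : Type*} {step : S → V → S} {s₀ : S} {Z : ℕ → Ω → S}
    (hZ₀ : ∀ ω, Z 0 ω = s₀) (hZ : ∀ n ω, Z (n + 1) ω = step (Z n ω) (X n ω)) (n : ℕ) :
    ∃ g : (Fin n → V) → S, ∀ ω, Z n ω = g (past X n ω) := by
  induction n with
  | zero => exact ⟨fun _ => s₀, hZ₀⟩
  | succ n ih =>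
    obtain ⟨g, hg⟩ := ih
    exact ⟨fun f => step (g (Fin.init f)) (f (Fin.last n)), fun ω => by rw [hZ, hg]; rfl⟩

/-- The filtration generated by the pasts of `X`. Contrary to `Filtration.natural`, its `n`-th
σ-algebra excludes `X n`, the choice that drives step `n` of a process. -/
def pastFiltration [MeasurableSpace V] (hX : ∀ n, Measurable (X n)) : Filtration ℕ mΩ where
  seq n := MeasurableSpace.comap (past X n) inferInstance
  mono' k n hkn := by
    have hrestrict : Measurable fun (f : Fin n → V) (i : Fin k) => f (Fin.castLE hkn i) := by
      fun_prop
    calc MeasurableSpace.comap (past X k) inferInstance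
        = MeasurableSpace.comap (past X n)
            (MeasurableSpace.comap (fun f i => f (Fin.castLE hkn i)) inferInstance) := by
          rw [MeasurableSpace.comap_comp]
          rfl
      _ ≤ _ := MeasurableSpace.comap_mono hrestrict.comap_le
  le' n := (measurable_pi_lambda _ fun i : Fin n => hX i).comap_le

variable [Fintype V]

theorem condExp_apply_eq_sum_of_indep [MeasurableSpace V] [MeasurableSingletonClass V]
    [IsProbabilityMeasure μ] (hm : m ≤ mΩ) {Y : Ω → V} (hY : Measurable Y)
    (hind : Indep (MeasurableSpace.comap Y inferInstance) m μ) {ζ : V → Ω → ℝ}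
    (hζ : ∀ v, StronglyMeasurable[m] (ζ v)) (hint : ∀ v, Integrable (ζ v) μ) :
    μ[fun ω => ζ (Y ω) ω | m] =ᵐ[μ] fun ω => ∑ v, ζ v ω * μ.real (Y ⁻¹' {v}) := by
  let hit (v : V) : Ω → ℝ := (Y ⁻¹' {v}).indicator 1
  have hmeas (v : V) : MeasurableSet (Y ⁻¹' {v}) := hY (measurableSet_singleton v)
  have hhit (v : V) : Integrable (hit v) μ := (integrable_const 1).indicator (hmeas v)
  have hmul (v : V) : ζ v * hit v = (Y ⁻¹' {v}).indicator (ζ v) := by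
    simp only [hit, ← Set.indicator_mul_right, mul_one, Pi.one_apply, Pi.mul_def]
  have hmul_int (v : V) : Integrable (ζ v * hit v) μ := hmul v ▸ (hint v).indicator (hmeas v)
  have hhit_cond (v : V) : μ[hit v | m] =ᵐ[μ] fun _ => μ.real (Y ⁻¹' {v}) := by
    have hstrong : StronglyMeasurable[MeasurableSpace.comap Y inferInstance] (hit v) :=
      stronglyMeasurable_one.indicator ⟨{v}, measurableSet_singleton v, rfl⟩
    simpa only [hit, integral_indicator_one (hmeas v)] using
      condExp_indep_eq hY.comap_le hm hstrong hind
  have hdecomp : (fun ω => ζ (Y ω) ω) = ∑ v, ζ v * hit v := by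
    ext ω
    simp [hit, Set.indicator_apply]
  rw [hdecomp]
  refine (condExp_finsetSum (fun v _ => hmul_int v) m).trans ?_
  have hterm (v : V) : μ[ζ v * hit v | m] =ᵐ[μ] fun ω => ζ v ω * μ.real (Y ⁻¹' {v}) :=
    (condExp_mul_of_stronglyMeasurable_left (hζ v) (hmul_int v) (hhit v)).trans
      ((hhit_cond v).mono fun ω hω => by simp [hω])
  filter_upwards [ae_all_iff.2 hterm] with ω hω
  simp [hω]

namespace IsUniformIID

theorem measure_past_eq [Nonempty V] (h : IsUniformIID μ X) (n : ℕ) (f : Fin n → V) :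
    μ (past X n ⁻¹' {f}) = (Fintype.card V : ℝ≥0∞)⁻¹ ^ n := by
  rw [← h.2 n fun k => if hk : k < n then f ⟨k, hk⟩ else Classical.arbitrary V]
  congr 1
  ext ω
  simp +contextual [past, Fin.forall_iff, funext_iff]

theorem measure_past_inter_eq [Nonempty V] (h : IsUniformIID μ X) (n : ℕ) (f : Fin n → V) (v : V) :
    μ (past X n ⁻¹' {f} ∩ X n ⁻¹' {v}) = (Fintype.card V : ℝ≥0∞)⁻¹ ^ (n + 1) := by
  rw [← h.measure_past_eq (n + 1) (Fin.snoc f v)]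
  congr 1
  ext ω
  simp [past, funext_iff, Fin.forall_fin_succ', Set.preimage]

section Measurable

variable [MeasurableSpace V]

theorem measurable_s1 (h : IsUniformIID μ X) (n : ℕ) : Measurable (X n) :=
  measurable_to_countable' (h.1 n)

theorem measurable_past (h : IsUniformIID μ X) (n : ℕ) : Measurable (past X n) :=
  measurable_pi_lambda _ fun i => h.measurable_s1 i

variable [MeasurableSingletonClass V]

theorem measure_eq [Nonempty V] (h : IsUniformIID μ X) (n : ℕ) (v : V) :
    μ (X n ⁻¹' {v}) = (Fintype.card V : ℝ≥0∞)⁻¹ := by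
  have hK : (Fintype.card V : ℝ≥0∞) ≠ 0 := by simp
  have hpast (f : Fin n → V) : MeasurableSet (past X n ⁻¹' {f}) :=
    h.measurable_past n (measurableSet_singleton f)
  have hsum := sum_measure_preimage_singleton (μ := μ.restrict (X n ⁻¹' {v})) Finset.univ
    fun f _ => hpast f
  simp only [Measure.restrict_apply (hpast _), h.measure_past_inter_eq, Finset.coe_univ,
    Set.preimage_univ, Measure.restrict_apply_univ, Finset.sum_const, Finset.card_univ,
    Fintype.card_fun, Fintype.card_fin, nsmul_eq_mul, Nat.cast_pow] at hsum
  rw [← hsum, pow_succ, ← mul_assoc, ← mul_pow, ENNReal.mul_inv_cancel hK (by simp), one_pow,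
    one_mul]

theorem indepFun_past [Nonempty V] [IsProbabilityMeasure μ] (h : IsUniformIID μ X) (n : ℕ) :
    IndepFun (X n) (past X n) μ := by
  rw [indepFun_iff_map_prod_eq_prod_map_map (h.measurable_s1 n).aemeasurable
    (h.measurable_past n).aemeasurable]
  refine Measure.ext_of_singleton fun ⟨v, f⟩ => ?_
  rw [← Set.singleton_prod_singleton, Measure.prod_prod,
    Measure.map_apply ((h.measurable_s1 n).prodMk (h.measurable_past n))
      ((measurableSet_singleton v).prod (measurableSet_singleton f)),
    Measure.map_apply (h.measurable_s1 n) (measurableSet_singleton v),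
    Measure.map_apply (h.measurable_past n) (measurableSet_singleton f), Set.mk_preimage_prod,
    Set.inter_comm, h.measure_past_inter_eq, h.measure_past_eq, h.measure_eq, pow_succ']

theorem condExp_apply_eq_sum [Nonempty V] [IsProbabilityMeasure μ] (h : IsUniformIID μ X) (n : ℕ)
    (ζ : V → (Fin n → V) → ℝ) :
    μ[fun ω => ζ (X n ω) (past X n ω) | pastFiltration h.measurable_s1 n] =ᵐ[μ]
      fun ω => (∑ v, ζ v (past X n ω)) / Fintype.card V := by
  have hpast := h.measurable_past n
  have hmean := condExp_apply_eq_sum_of_indep (Y := X n) hpast.comap_le (h.measurable_s1 n)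
    (h.indepFun_past n) (ζ := fun v ω => ζ v (past X n ω))
    (fun v => ((measurable_of_finite (ζ v)).comp (comap_measurable _)).stronglyMeasurable)
    (fun v => (Integrable.of_finite (f := ζ v)).comp_measurable hpast)
  refine hmean.trans (ae_of_all _ fun ω => ?_)
  simp [measureReal_def, h.measure_eq, Finset.sum_mul, div_eq_mul_inv]

theorem martingale_of_sum_increments_eq [Nonempty V] [IsProbabilityMeasure μ]
    (h : IsUniformIID μ X) {S : Type*} {step : S → V → S} {s₀ : S} {Z : ℕ → Ω → S}
    (hZ₀ : ∀ ω, Z 0 ω = s₀) (hZ : ∀ n ω, Z (n + 1) ω = step (Z n ω) (X n ω)) {Φ : S → ℝ} {γ : ℝ}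
    (hdrift : ∀ s, ∑ v, (Φ (step s v) - Φ s) = γ) :
    Martingale (fun n ω => Φ (Z n ω) - Φ s₀ - n * (γ / Fintype.card V))
      (pastFiltration h.measurable_s1) μ := by
  choose g hg using exists_eq_comp_past hZ₀ hZ
  let D (n : ℕ) (f : Fin n → V) : ℝ := Φ (g n f) - Φ s₀ - n * (γ / Fintype.card V)
  refine martingale_of_condExp_sub_eq_zero_nat (fun n => ?_) (fun n => ?_) fun n => ?_
  · simp only [hg]
    exact ((measurable_of_finite (D n)).comp (comap_measurable (past X n))).stronglyMeasurable
  · simp only [hg]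
    exact (Integrable.of_finite (f := D n)).comp_measurable (h.measurable_past n)
  · have hincr : ((fun ω => Φ (Z (n + 1) ω) - Φ s₀ - (n + 1 : ℕ) * (γ / Fintype.card V)) -
        fun ω => Φ (Z n ω) - Φ s₀ - n * (γ / Fintype.card V)) =
        fun ω => (fun v f => Φ (step (g n f) v) - Φ (g n f) - γ / Fintype.card V) (X n ω)
          (past X n ω) := by
      ext ω
      simp only [Pi.sub_apply, hZ, hg]
      push_cast
      ring
    simp only [hincr]
    refine (h.condExp_apply_eq_sum n fun v f =>
      Φ (step (g n f) v) - Φ (g n f) - γ / Fintype.card V).trans (ae_of_all _ fun ω => ?_)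
    simp only [Finset.sum_sub_distrib, hdrift]
    simp [mul_div_cancel₀]

end Measurable

theorem ae_tendsto_div_of_sum_increments_eq [Nonempty V] [IsProbabilityMeasure μ]
    (h : IsUniformIID μ X) {S : Type*} {step : S → V → S} {s₀ : S} {Z : ℕ → Ω → S}
    (hZ₀ : ∀ ω, Z 0 ω = s₀) (hZ : ∀ n ω, Z (n + 1) ω = step (Z n ω) (X n ω)) {Φ : S → ℝ} {C γ : ℝ}
    (hC : ∀ s v, |Φ (step s v) - Φ s| ≤ C) (hdrift : ∀ s, ∑ v, (Φ (step s v) - Φ s) = γ) :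
    ∀ᵐ ω ∂μ, Tendsto (fun n => Φ (Z n ω) / n) atTop (𝓝 (γ / Fintype.card V)) := by
  let _ : MeasurableSpace V := ⊤
  have hmart := h.martingale_of_sum_increments_eq hZ₀ hZ hdrift
  set g := γ / Fintype.card V
  have hbound (n : ℕ) (ω : Ω) : |(Φ (Z (n + 1) ω) - Φ s₀ - (n + 1 : ℕ) * g) -
      (Φ (Z n ω) - Φ s₀ - n * g)| ≤ C + |g| := by
    calc _ = |(Φ (step (Z n ω) (X n ω)) - Φ (Z n ω)) - g| := by
          rw [hZ]; push_cast; ring_nf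
      _ ≤ C + |g| := (abs_sub _ _).trans (by gcongr; exact hC _ _)
  filter_upwards [ae_tendsto_martingale_div_atTop_zero hmart (by ext ω; simp [hZ₀])
    fun n => ae_of_all _ (hbound n)] with ω hω
  have hconst : Tendsto (fun n : ℕ => Φ s₀ / n + g) atTop (𝓝 (0 + g)) :=
    (tendsto_const_div_atTop_nhds_zero_nat _).add_const g
  refine ((hω.add hconst).congr' ?_).trans (by simp)
  filter_upwards [eventually_ne_atTop 0] with n hn
  field_simp
  ring

end IsUniformIID

end UniformDriver

section LinearGrowth

theorem tendsto_floor_mul_div {a : ℕ → ℝ} {L : ℝ} (ha : Tendsto (fun n => a n / n) atTop (𝓝 L))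
    {ρ : ℝ} (hρ : 0 < ρ) : Tendsto (fun t : ℝ => a ⌊ρ * t⌋₊ / t) atTop (𝓝 (ρ * L)) := by
  have hfloor : Tendsto (fun t : ℝ => ⌊ρ * t⌋₊) atTop atTop :=
    tendsto_nat_floor_atTop.comp (tendsto_id.const_mul_atTop hρ)
  refine ((tendsto_nat_floor_mul_div_atTop hρ.le).mul (ha.comp hfloor)).congr' ?_
  filter_upwards [hfloor.eventually_ne_atTop 0] with t ht
  simp only [Function.comp_apply]
  field_simp

theorem tendsto_floor_div {a : ℕ → ℝ} {L : ℝ} (ha : Tendsto (fun n => a n / n) atTop (𝓝 L)) :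
    Tendsto (fun t : ℝ => a ⌊t⌋₊ / t) atTop (𝓝 L) := by
  simpa only [one_mul] using tendsto_floor_mul_div ha one_pos

theorem eventually_exists_mem_Ico_floor {p : ℕ → Prop} {c : ℝ} (hc : 0 < c)
    (hp : Tendsto (fun n => (Nat.count p n : ℝ) / n) atTop (𝓝 c)) {ρ : ℝ} (hρ : 0 < ρ)
    (hρ1 : ρ < 1) : ∀ᶠ t : ℝ in atTop, ∃ k ∈ Set.Ico ⌊ρ * t⌋₊ ⌊t⌋₊, p k := by
  filter_upwards [(tendsto_floor_mul_div hp hρ).eventually_lt (tendsto_floor_div hp)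
    (mul_lt_of_lt_one_left hc hρ1), eventually_gt_atTop 0] with t hlt ht
  exact Nat.exists_of_count_lt_count (by exact_mod_cast (div_lt_div_iff_of_pos_right ht).1 hlt)

theorem tendsto_div_of_eventually_floor_le {a b : ℕ → ℝ} {L : ℝ} (hba : ∀ n, b n ≤ a n)
    (hab : ∀ ρ : ℝ, 0 < ρ → ρ < 1 → ∀ᶠ t : ℝ in atTop, a ⌊ρ * t⌋₊ ≤ b ⌊t⌋₊)
    (ha : Tendsto (fun n => a n / n) atTop (𝓝 L)) :
    Tendsto (fun n => b n / n) atTop (𝓝 L) := by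
  refine tendsto_order.2 ⟨fun l hl => ?_, fun u hu => ?_⟩
  · have hcont : Tendsto (fun ρ : ℝ => ρ * L) (𝓝[<] 1) (𝓝 L) := by
      simpa using (continuous_mul_const L).tendsto' 1 (1 * L) rfl |>.mono_left nhdsWithin_le_nhds
    obtain ⟨ρ, hlρ, hρ0, hρ1⟩ := ((hcont.eventually_const_lt hl).and
      (Ioo_mem_nhdsLT one_pos : ∀ᶠ ρ : ℝ in 𝓝[<] 1, ρ ∈ Set.Ioo 0 1)).exists
    have hreal : ∀ᶠ t : ℝ in atTop, l < b ⌊t⌋₊ / t := by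
      filter_upwards [(tendsto_floor_mul_div ha hρ0).eventually_const_lt hlρ, hab ρ hρ0 hρ1,
        eventually_gt_atTop 0] with t hlt hle ht
      exact hlt.trans_le (by gcongr)
    simpa using tendsto_natCast_atTop_atTop.eventually hreal
  · filter_upwards [ha.eventually_lt_const hu] with n hn
    exact (div_le_div_of_nonneg_right (hba n) n.cast_nonneg).trans_lt hn

theorem tendsto_div_of_abs_sub_le {a b : ℕ → ℝ} {B L : ℝ} (hab : ∀ n, |a n - b n| ≤ B)
    (ha : Tendsto (fun n => a n / n) atTop (𝓝 L)) : Tendsto (fun n => b n / n) atTop (𝓝 L) := by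
  have hdiff : Tendsto (fun n : ℕ => (a n - b n) / n) atTop (𝓝 0) :=
    tendsto_bdd_div_atTop_nhds_zero (.of_forall fun n => (abs_le.1 (hab n)).1)
      (.of_forall fun n => (abs_le.1 (hab n)).2) tendsto_natCast_atTop_atTop
  simpa [← sub_div] using ha.sub hdiff

end LinearGrowth

section Deposition

variable {V : Type*} [Fintype V] {G : SimpleGraph V}

/-- One step of ballistic deposition: the heights after a particle falls on `v`. It is the
transition map of `heightProcess`. -/
noncomputable def deposit (G : SimpleGraph V) (h : V → ℕ) (v : V) : V → ℕ :=
  Function.update h v (1 + Finset.univ.sup fun y => if y = v ∨ G.Adj v y then h y else 0)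

theorem heightProcess_succ (h₀ : V → ℕ) (X : ℕ → V) (n : ℕ) :
    heightProcess G h₀ X (n + 1) = deposit G (heightProcess G h₀ X n) (X n) := by
  ext x
  by_cases hx : x = X n
  · subst hx
    simp [heightProcess, deposit]
  · simp [heightProcess, deposit, hx]

theorem deposit_self (h : V → ℕ) (v : V) :
    deposit G h v v = ({y | y = v ∨ G.Adj v y} : Finset V).sup h + 1 := by
  rw [deposit, Function.update_self, add_comm, Finset.sup_ite]
  simp

theorem deposit_of_ne {h : V → ℕ} {v x : V} (hx : x ≠ v) : deposit G h v x = h x :=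
  Function.update_of_ne hx _ _

theorem lt_deposit_self {h : V → ℕ} {v y : V} (hy : y = v ∨ G.Adj v y) :
    h y < deposit G h v v := by
  rw [deposit_self, Nat.lt_add_one_iff]
  exact Finset.le_sup (by simpa using hy)

theorem le_deposit (h : V → ℕ) (v : V) : h ≤ deposit G h v := fun x => by
  rcases eq_or_ne x v with rfl | hx
  · exact (lt_deposit_self (.inl rfl)).le
  · rw [deposit_of_ne hx]

theorem sup_deposit_of_notMem {h : V → ℕ} {v : V} {s : Finset V} (hv : v ∉ s) :
    s.sup (deposit G h v) = s.sup h :=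
  Finset.sup_congr rfl fun _ hx => deposit_of_ne (ne_of_mem_of_not_mem hx hv)

theorem sup_deposit_of_mem {h : V → ℕ} {v : V} {s : Finset V} (hv : v ∈ s) :
    s.sup (deposit G h v) = s.sup h ⊔ deposit G h v v := by
  refine le_antisymm (Finset.sup_le fun x hx => ?_)
    (sup_le (Finset.sup_mono_fun fun x _ => le_deposit h v x) (Finset.le_sup hv))
  rcases eq_or_ne x v with rfl | hxv
  · exact le_sup_right
  · exact (deposit_of_ne hxv).trans_le (le_sup_of_le_left (Finset.le_sup hx))

theorem sup_univ_deposit_le (h : V → ℕ) (v : V) :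
    Finset.univ.sup (deposit G h v) ≤ Finset.univ.sup h + 1 := by
  rw [sup_deposit_of_mem (Finset.mem_univ v), deposit_self]
  exact sup_le (Nat.le_succ _) (Nat.succ_le_succ (Finset.sup_mono (Finset.subset_univ _)))

theorem heightProcess_mono (h₀ : V → ℕ) (X : ℕ → V) : Monotone (heightProcess G h₀ X) :=
  monotone_nat_of_le_succ fun n => heightProcess_succ (G := G) h₀ X n ▸ le_deposit _ _

theorem heightProcess_le_of_chosen {h₀ : V → ℕ} {X : ℕ → V} {x y : V} (hy : y = x ∨ G.Adj x y)
    {s t : ℕ} (hx : ∃ k ∈ Set.Ico s t, X k = x) :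
    heightProcess G h₀ X s y ≤ heightProcess G h₀ X t x := by
  obtain ⟨k, ⟨hsk, hkt⟩, rfl⟩ := hx
  calc heightProcess G h₀ X s y ≤ heightProcess G h₀ X k y := heightProcess_mono h₀ X hsk y
    _ ≤ heightProcess G h₀ X (k + 1) (X k) := by
        rw [heightProcess_succ]
        exact (lt_deposit_self hy).le
    _ ≤ heightProcess G h₀ X t (X k) := heightProcess_mono h₀ X hkt (X k)

theorem eventually_heightProcess_floor_le (hG : G.Connected) {h₀ : V → ℕ} {X : ℕ → V}
    (hX : ∀ v, ∀ ρ : ℝ, 0 < ρ → ρ < 1 → ∀ᶠ t : ℝ in atTop, ∃ k ∈ Set.Ico ⌊ρ * t⌋₊ ⌊t⌋₊, X k = v)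
    (z x : V) {ρ : ℝ} (hρ : 0 < ρ) (hρ1 : ρ < 1) :
    ∀ᶠ t : ℝ in atTop, heightProcess G h₀ X ⌊ρ * t⌋₊ z ≤ heightProcess G h₀ X ⌊t⌋₊ x := by
  have hpath := (SimpleGraph.reachable_iff_reflTransGen z x).1 (hG z x)
  induction hpath generalizing ρ with
  | refl =>
    filter_upwards [hX z ρ hρ hρ1] with t ht
    exact heightProcess_le_of_chosen (.inl rfl) ht
  | @tail y x _ hyx ih =>
    have hsqrt : 0 < √ρ := Real.sqrt_pos.2 hρ
    have hsqrt1 : √ρ < 1 := by rwa [Real.sqrt_lt' one_pos, one_pow]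
    filter_upwards [(tendsto_id.const_mul_atTop hsqrt).eventually (ih hsqrt hsqrt1),
      hX x (√ρ) hsqrt hsqrt1] with t hzy hchosen
    rw [id, ← mul_assoc, Real.mul_self_sqrt hρ.le] at hzy
    exact hzy.trans (heightProcess_le_of_chosen (.inr hyx.symm) hchosen)

theorem tendsto_iInf_heightProcess_div (hG : G.Connected) {h₀ : V → ℕ} {X : ℕ → V}
    (hX : ∀ v, ∀ ρ : ℝ, 0 < ρ → ρ < 1 → ∀ᶠ t : ℝ in atTop, ∃ k ∈ Set.Ico ⌊ρ * t⌋₊ ⌊t⌋₊, X k = v)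
    {L : ℝ} (hsup : Tendsto (fun n : ℕ => (⨆ x, (heightProcess G h₀ X n x : ℝ)) / n) atTop (𝓝 L)) :
    Tendsto (fun n : ℕ => (⨅ x, (heightProcess G h₀ X n x : ℝ)) / n) atTop (𝓝 L) := by
  have := hG.nonempty
  refine tendsto_div_of_eventually_floor_le (fun n => ?_) (fun ρ hρ hρ1 => ?_) hsup
  · exact ciInf_le_ciSup (Set.finite_range _).bddBelow (Set.finite_range _).bddAbove
  · filter_upwards [eventually_all.2 fun z => eventually_all.2 fun x =>
      eventually_heightProcess_floor_le (h₀ := h₀) hG hX z x hρ hρ1] with t ht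
    exact ciSup_le fun z => le_ciInf fun x => by exact_mod_cast ht z x

theorem ciSup_natCast_eq_sup [Nonempty V] (h : V → ℕ) :
    ⨆ x, (h x : ℝ) = (Finset.univ.sup h : ℕ) := by
  obtain ⟨x, -, hx⟩ := Finset.exists_mem_eq_sup Finset.univ Finset.univ_nonempty h
  refine le_antisymm (ciSup_le fun y => ?_) (hx ▸ ?_)
  · exact_mod_cast Finset.le_sup (Finset.mem_univ y)
  · exact le_ciSup (f := fun x => (h x : ℝ)) (Set.finite_range _).bddAbove x

theorem IsUniformIID.ae_eventually_exists_mem_Ico_floor [Nonempty V] {Ω : Type*}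
    [MeasurableSpace Ω] {μ : Measure Ω} [IsProbabilityMeasure μ] {X : ℕ → Ω → V}
    (h : IsUniformIID μ X) (v : V) : ∀ᵐ ω ∂μ, ∀ ρ : ℝ, 0 < ρ → ρ < 1 →
      ∀ᶠ t : ℝ in atTop, ∃ k ∈ Set.Ico ⌊ρ * t⌋₊ ⌊t⌋₊, X k ω = v := by
  have hcount := h.ae_tendsto_div_of_sum_increments_eq (Z := fun n ω => Nat.count (X · ω = v) n)
    (step := fun c w => c + if w = v then 1 else 0) (s₀ := 0) (Φ := fun c => (c : ℝ)) (C := 1)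
    (γ := 1) (fun ω => Nat.count_zero _) (fun n ω => Nat.count_succ _ n)
    (fun c w => by split_ifs <;> simp) (fun c => by simp)
  filter_upwards [hcount] with ω hω ρ hρ hρ1
  exact eventually_exists_mem_Ico_floor (by positivity) hω hρ hρ1

theorem abs_deposit_sub_le_of_abs_sub_sup_le {Φ : (V → ℕ) → ℝ} {B : ℝ}
    (hB : ∀ h, |Φ h - (Finset.univ.sup h : ℕ)| ≤ B) (h : V → ℕ) (v : V) :
    |Φ (deposit G h v) - Φ h| ≤ 2 * B + 1 := by
  have hle : ((Finset.univ.sup h : ℕ) : ℝ) ≤ (Finset.univ.sup (deposit G h v) : ℕ) := by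
    exact_mod_cast Finset.sup_mono_fun fun x _ => le_deposit h v x
  have hge : ((Finset.univ.sup (deposit G h v) : ℕ) : ℝ) ≤ (Finset.univ.sup h : ℕ) + 1 := by
    exact_mod_cast sup_univ_deposit_le h v
  have hold := abs_le.1 (hB h)
  have hnew := abs_le.1 (hB (deposit G h v))
  exact abs_le.2 ⟨by linarith, by linarith⟩

theorem isGrowthRate_of_potential (hG : G.Connected) {Φ : (V → ℕ) → ℝ} {B γ : ℝ}
    (hγ : 0 < γ) (hB : ∀ h, |Φ h - (Finset.univ.sup h : ℕ)| ≤ B)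
    (hdrift : ∀ h, ∑ v, (Φ (deposit G h v) - Φ h) = γ) : IsGrowthRate G γ := by
  have := hG.nonempty
  refine ⟨hγ, fun {Ω} _ μ _ X hX => ?_⟩
  let H (n : ℕ) (ω : Ω) : V → ℕ := heightProcess G (fun _ => 0) (fun k => X k ω) n
  have hsup : ∀ᵐ ω ∂μ, Tendsto (fun n : ℕ => (⨆ x, (H n ω x : ℝ)) / n) atTop
      (𝓝 (γ / Fintype.card V)) := by
    filter_upwards [hX.ae_tendsto_div_of_sum_increments_eq (Z := H) (fun _ => rfl)
      (fun n ω => heightProcess_succ _ _ n) (abs_deposit_sub_le_of_abs_sub_sup_le hB) hdrift]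
      with ω hω
    exact tendsto_div_of_abs_sub_le (fun n => ciSup_natCast_eq_sup (H n ω) ▸ hB (H n ω)) hω
  have hinf : ∀ᵐ ω ∂μ, Tendsto (fun n : ℕ => (⨅ x, (H n ω x : ℝ)) / n) atTop
      (𝓝 (γ / Fintype.card V)) := by
    filter_upwards [hsup, ae_all_iff.2 hX.ae_eventually_exists_mem_Ico_floor] with ω hω hvisit
    exact tendsto_iInf_heightProcess_div hG hvisit hω
  have hscale {a : ℕ → ℝ} (ha : Tendsto (fun n => a n / n) atTop (𝓝 (γ / Fintype.card V))) :
      Tendsto (fun n => Fintype.card V * a n / n) atTop (𝓝 γ) := by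
    simpa [mul_div_assoc, mul_div_cancel₀] using ha.const_mul (Fintype.card V : ℝ)
  exact ⟨hsup.mono fun ω => hscale, hinf.mono fun ω => hscale⟩

end Deposition

section DecayRate

theorem one_add_sub_sqrt_sq {κ : ℝ} (hκ : 1 ≤ κ) :
    1 + (κ - √(κ ^ 2 - 1)) ^ 2 = 2 * κ * (κ - √(κ ^ 2 - 1)) := by
  linear_combination Real.sq_sqrt (by nlinarith : 0 ≤ κ ^ 2 - 1)

theorem sub_sqrt_sq_sub_one_nonneg {κ : ℝ} (hκ : 0 ≤ κ) : 0 ≤ κ - √(κ ^ 2 - 1) :=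
  sub_nonneg.2 (Real.sqrt_le_iff.2 ⟨hκ, by linarith⟩)

theorem sub_sqrt_sq_sub_one_lt_one {κ : ℝ} (hκ : 1 < κ) : κ - √(κ ^ 2 - 1) < 1 :=
  sub_lt_comm.1 (Real.lt_sqrt_of_sq_lt (by nlinarith))

theorem inv_sqrt_sub_div_inv_add_eq {κ : ℝ} (hκ : 1 < κ) :
    (√(κ ^ 2 - 1) - κ + 1)⁻¹ / ((√(κ ^ 2 - 1) - κ + 1)⁻¹ + 1 / (2 * κ)) =
      2 * κ * (1 / (2 * √(κ ^ 2 - 1)) * (1 - (κ - √(κ ^ 2 - 1)))) := by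
  set s := √(κ ^ 2 - 1)
  have : 0 < s := Real.sqrt_pos.2 (by nlinarith)
  have hsq : s ^ 2 = κ ^ 2 - 1 := Real.sq_sqrt (by nlinarith)
  have hpos : 0 < s - κ + 1 := by linarith [sub_sqrt_sq_sub_one_lt_one hκ]
  have hfactor : (s - κ + 1) * (2 * κ + (s - κ + 1)) = 2 * s := by linear_combination hsq
  rw [← hfactor]
  field_simp
  ring

end DecayRate

section CocktailParty

variable {V J : Type*} [Fintype V] {G : SimpleGraph V} {block : V → Option J} {opp : J → J}

/-- `G` is obtained from a cocktail party graph with vertex set `J`, in which `opp j` is the only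
vertex not adjacent to `j`, by cloning vertices and adding dominant ones: `block x = some j` if `x`
is a clone of `j`, and `block x = none` if `x` is one of the added dominant vertices. -/
structure IsCocktailParty (G : SimpleGraph V) (block : V → Option J) (opp : J → J) : Prop where
  involutive : Function.Involutive opp
  opp_ne (j : J) : opp j ≠ j
  eq_or_adj_iff (x y : V) : y = x ∨ G.Adj x y ↔ ∀ j, block x = some j → block y ≠ some (opp j)

/-- The greatest height outside the block `j`. -/
noncomputable def maxOutside (block : V → Option J) (h : V → ℕ) (j : J) : ℕ :=
  ({x | block x ≠ some j} : Finset V).sup h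

/-- The block `a` leads if every other block can be removed without lowering the greatest height.
A single block can contain all the highest vertices, so there is always a leader. -/
def IsLeader (block : V → Option J) (h : V → ℕ) (a : J) : Prop :=
  ∀ j ≠ a, maxOutside block h j = Finset.univ.sup h

/-- The lead of the leading block over the other vertices. Only one term of the supremum can be
nonzero. -/
noncomputable def lead [Fintype J] (block : V → Option J) (h : V → ℕ) : ℕ :=
  Finset.univ.sup fun j => Finset.univ.sup h - maxOutside block h j

theorem maxOutside_le_sup (h : V → ℕ) (j : J) : maxOutside block h j ≤ Finset.univ.sup h :=
  Finset.sup_mono (Finset.subset_univ _)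

theorem exists_isLeader [Nonempty J] (block : V → Option J) (h : V → ℕ) :
    ∃ a, IsLeader block h a := by
  by_cases hall : ∀ j, maxOutside block h j = Finset.univ.sup h
  · exact ⟨Classical.arbitrary J, fun j _ => hall j⟩
  obtain ⟨a, ha⟩ := not_forall.1 hall
  have hVne : (Finset.univ : Finset V).Nonempty := by
    by_contra hV
    simp [maxOutside, Finset.not_nonempty_iff_eq_empty.1 hV] at ha
  obtain ⟨x, -, hx⟩ := Finset.exists_mem_eq_sup Finset.univ hVne h
  have le_maxOutside {j : J} (hxj : block x ≠ some j) : Finset.univ.sup h ≤ maxOutside block h j :=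
    hx.trans_le (Finset.le_sup (f := h) (by simpa using hxj))
  have hxa : block x = some a := by
    by_contra hxa
    exact ha ((maxOutside_le_sup h a).antisymm (le_maxOutside hxa))
  exact ⟨a, fun j hj => (maxOutside_le_sup h j).antisymm
    (le_maxOutside (by simpa [hxa] using hj.symm))⟩

theorem IsLeader.lead_add_maxOutside [Fintype J] {h : V → ℕ} {a : J} (ha : IsLeader block h a) :
    lead block h + maxOutside block h a = Finset.univ.sup h := by
  have hlead : lead block h = Finset.univ.sup h - maxOutside block h a := by
    refine le_antisymm (Finset.sup_le fun j _ => ?_)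
      (Finset.le_sup (f := fun j => Finset.univ.sup h - maxOutside block h j) (Finset.mem_univ a))
    rcases eq_or_ne j a with rfl | hj
    · rfl
    · simp [ha j hj]
  rw [hlead, Nat.sub_add_cancel (maxOutside_le_sup h a)]

theorem maxOutside_deposit_of_eq {h : V → ℕ} {v : V} {j : J} (hv : block v = some j) :
    maxOutside block (deposit G h v) j = maxOutside block h j :=
  sup_deposit_of_notMem (by simpa using hv)

theorem maxOutside_deposit_of_ne {h : V → ℕ} {v : V} {j : J} (hv : block v ≠ some j) :
    maxOutside block (deposit G h v) j = maxOutside block h j ⊔ deposit G h v v :=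
  sup_deposit_of_mem (by simpa using hv)

namespace IsCocktailParty

variable (hG : IsCocktailParty G block opp)
include hG

theorem deposit_self_of_eq_none {h : V → ℕ} {v : V} (hv : block v = none) :
    deposit G h v v = Finset.univ.sup h + 1 := by
  simp [deposit_self, hG.eq_or_adj_iff, hv]

theorem deposit_self_of_eq_some {h : V → ℕ} {v : V} {c : J} (hv : block v = some c) :
    deposit G h v v = maxOutside block h (opp c) + 1 := by
  simp [deposit_self, hG.eq_or_adj_iff, hv, maxOutside]

variable {h : V → ℕ} {v : V}

theorem sup_deposit_of_eq_none (hv : block v = none) :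
    Finset.univ.sup (deposit G h v) = Finset.univ.sup h + 1 := by
  rw [sup_deposit_of_mem (Finset.mem_univ v), hG.deposit_self_of_eq_none hv]
  exact sup_of_le_right (Nat.le_succ _)

theorem sup_deposit_of_maxOutside_eq {c : J} (hv : block v = some c)
    (hc : maxOutside block h (opp c) = Finset.univ.sup h) :
    Finset.univ.sup (deposit G h v) = Finset.univ.sup h + 1 := by
  rw [sup_deposit_of_mem (Finset.mem_univ v), hG.deposit_self_of_eq_some hv, hc]
  exact sup_of_le_right (Nat.le_succ _)

theorem sup_deposit_of_maxOutside_lt {c : J} (hv : block v = some c)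
    (hc : maxOutside block h (opp c) < Finset.univ.sup h) :
    Finset.univ.sup (deposit G h v) = Finset.univ.sup h := by
  rw [sup_deposit_of_mem (Finset.mem_univ v), hG.deposit_self_of_eq_some hv]
  exact sup_of_le_left hc

variable [Fintype J]

theorem lead_deposit_of_eq_none (hv : block v = none) : lead block (deposit G h v) = 0 := by
  refine Nat.le_zero.1 (Finset.sup_le fun j _ => ?_)
  rw [hG.sup_deposit_of_eq_none hv, maxOutside_deposit_of_ne (by simp [hv]),
    hG.deposit_self_of_eq_none hv, sup_of_le_right (by grw [maxOutside_le_sup]; simp), Nat.sub_self]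

theorem lead_deposit_of_maxOutside_eq {c : J} (hv : block v = some c)
    (hc : maxOutside block h (opp c) = Finset.univ.sup h) :
    lead block (deposit G h v) + maxOutside block h c = Finset.univ.sup h + 1 := by
  have hleader : IsLeader block (deposit G h v) c := fun j hj => by
    rw [hG.sup_deposit_of_maxOutside_eq hv hc,
      maxOutside_deposit_of_ne (by simpa [hv] using hj.symm), hG.deposit_self_of_eq_some hv, hc]
    exact sup_of_le_right ((maxOutside_le_sup h j).trans (Nat.le_succ _))
  rw [← hG.sup_deposit_of_maxOutside_eq hv hc, ← hleader.lead_add_maxOutside,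
    maxOutside_deposit_of_eq hv]

theorem lead_deposit_of_maxOutside_lt {a : J} (ha : IsLeader block h a)
    (hv : block v = some (opp a)) (hlt : maxOutside block h a < Finset.univ.sup h) :
    lead block (deposit G h v) + 1 = lead block h := by
  have hself := hG.deposit_self_of_eq_some (h := h) hv
  have hsup := hG.sup_deposit_of_maxOutside_lt (h := h) hv (by rwa [hG.involutive])
  rw [hG.involutive] at hself
  have hleader : IsLeader block (deposit G h v) a := fun j hj => by
    refine le_antisymm (maxOutside_le_sup _ _) ?_
    rw [hsup, ← ha j hj]
    exact Finset.sup_mono_fun fun x _ => le_deposit h v x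
  have hout : maxOutside block (deposit G h v) a = maxOutside block h a + 1 := by
    rw [maxOutside_deposit_of_ne (by simpa [hv] using hG.opp_ne a), hself]
    exact sup_of_le_right (Nat.le_succ _)
  have hold := ha.lead_add_maxOutside
  have hnew := hleader.lead_add_maxOutside
  omega

theorem lead_deposit_of_isLeader {a : J} (ha : IsLeader block h a) (hv : block v = some a) :
    lead block (deposit G h v) = lead block h + 1 := by
  have hnew := hG.lead_deposit_of_maxOutside_eq hv (ha (opp a) (hG.opp_ne a))
  have hold := ha.lead_add_maxOutside
  omega

end IsCocktailParty

/-- The potential whose expected increment does not depend on the height function `h`, for a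
suitable choice of `b` and `r`. -/
noncomputable def potential [Fintype J] (block : V → Option J) (b r : ℝ) (h : V → ℕ) : ℝ :=
  (Finset.univ.sup h : ℕ) + b * r ^ lead block h

theorem abs_potential_sub_sup_le [Fintype J] {b r : ℝ} (hr0 : 0 ≤ r) (hr1 : r ≤ 1) (h : V → ℕ) :
    |potential block b r h - (Finset.univ.sup h : ℕ)| ≤ |b| := by
  rw [potential, add_sub_cancel_left, abs_mul, abs_of_nonneg (pow_nonneg hr0 _)]
  exact mul_le_of_le_one_right (abs_nonneg b) (pow_le_one₀ hr0 hr1)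

/-- The potential after a deposit in the class `o`, measured from the greatest height before the
deposit, if the block `a` has the lead `d`. -/
noncomputable def potentialAfter (opp : J → J) (b r : ℝ) (a : J) (d : ℕ) : Option J → ℝ
  | none => 1 + b
  | some c =>
      if c = a then 1 + b * r ^ (d + 1)
      else if c = opp a ∧ d ≠ 0 then b * r ^ (d - 1)
      else 1 + b * r

theorem sum_potentialAfter [Fintype J] {n N b r : ℝ} {a : J} (ha : opp a ≠ a)
    (hr : n * (1 + r ^ 2) = (N + n * Fintype.card J) * r)
    (hb : b * (N + n * Fintype.card J - 2 * n * r) = n) (d : ℕ) :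
    N * potentialAfter opp b r a d none + n * ∑ j, potentialAfter opp b r a d (some j) =
      (N + n * Fintype.card J) * (1 + b * r ^ d) - n * Fintype.card J * (b * (1 - r)) := by
  have hsum : ∑ j, (potentialAfter opp b r a d (some j) - (1 + b * r)) =
      (potentialAfter opp b r a d (some a) - (1 + b * r)) +
        (potentialAfter opp b r a d (some (opp a)) - (1 + b * r)) :=
    Fintype.sum_eq_add a (opp a) ha.symm fun j hj => by simp [potentialAfter, hj.1, hj.2]
  have hbalance : n * (potentialAfter opp b r a d (some a) +
      potentialAfter opp b r a d (some (opp a))) =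
        n + (N + n * Fintype.card J) * (b * r ^ d) := by
    -- For `d ≠ 0` this is the recurrence solved by `r ^ d`; the case `d = 0` determines `b`.
    rcases d with _ | d
    · simp only [potentialAfter, ↓reduceIte, zero_add, pow_one, ha, ne_eq, not_true_eq_false,
        and_false, pow_zero, mul_one]
      linear_combination -hb
    · simp only [potentialAfter, ↓reduceIte, ha, ne_eq, Nat.add_eq_zero_iff, one_ne_zero, and_false,
        not_false_eq_true, and_self, add_tsub_cancel_right]
      linear_combination b * r ^ d * hr
  simp only [Finset.sum_sub_distrib, Finset.sum_const, Finset.card_univ, nsmul_eq_mul] at hsum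
  simp only [potentialAfter] at hsum hbalance ⊢
  linear_combination n * hsum + hbalance + hb

theorem IsCocktailParty.potential_deposit [Fintype J] (hG : IsCocktailParty G block opp) (b r : ℝ)
    {h : V → ℕ} {a : J} (ha : IsLeader block h a) (v : V) :
    potential block b r (deposit G h v) =
      (Finset.univ.sup h : ℕ) + potentialAfter opp b r a (lead block h) (block v) := by
  have hlead := ha.lead_add_maxOutside
  rcases hv : block v with _ | c
  · simp [potential, potentialAfter, hG.sup_deposit_of_eq_none hv, hG.lead_deposit_of_eq_none hv,
      add_assoc]
  by_cases hca : c = a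
  · subst hca
    simp [potential, potentialAfter, hG.lead_deposit_of_isLeader ha hv,
      hG.sup_deposit_of_maxOutside_eq hv (ha (opp c) (hG.opp_ne c)), add_assoc]
  by_cases hopp : c = opp a ∧ lead block h ≠ 0
  · obtain ⟨rfl, hd⟩ := hopp
    have hlt : maxOutside block h a < Finset.univ.sup h := by omega
    have hdown := hG.lead_deposit_of_maxOutside_lt ha hv hlt
    simp [potential, potentialAfter, hG.opp_ne a, hd, Nat.eq_sub_of_add_eq hdown,
      hG.sup_deposit_of_maxOutside_lt hv (by rwa [hG.involutive])]
  · have hc : maxOutside block h (opp c) = Finset.univ.sup h := by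
      by_cases hoc : opp c = a
      · have hd : lead block h = 0 := by
          by_contra hd
          exact hopp ⟨by rw [← hoc, hG.involutive], hd⟩
        rw [hoc]
        omega
      · exact ha _ hoc
    have hup := hG.lead_deposit_of_maxOutside_eq hv hc
    rw [ha c hca, add_comm, Nat.add_left_cancel_iff] at hup
    simp [potential, potentialAfter, hca, hopp, hup, hG.sup_deposit_of_maxOutside_eq hv hc,
      add_assoc]

section Blocks

variable {n N : ℕ} (hn : ∀ j, Nat.card {v // block v = some j} = n)
  (hN : Nat.card {v // block v = none} = N)
include hn hN

theorem sum_comp_block [Fintype J] (f : Option J → ℝ) :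
    ∑ v, f (block v) = N * f none + n * ∑ j, f (some j) := by
  have hfiber (o : Option J) :
      ∑ v with block v = o, f (block v) = Nat.card {v // block v = o} * f o := by
    rw [Finset.sum_congr rfl fun v hv => by rw [(Finset.mem_filter.1 hv).2], Finset.sum_const,
      nsmul_eq_mul, Nat.card_eq_fintype_card, Fintype.card_subtype]
  rw [← Finset.sum_fiberwise Finset.univ block]
  simp only [hfiber, Fintype.sum_option, hn, hN, Finset.mul_sum]

theorem card_eq_of_card_block [Fintype J] : (Fintype.card V : ℝ) = N + n * Fintype.card J := by
  simpa using sum_comp_block hn hN fun _ => 1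

end Blocks

namespace IsCocktailParty

variable (hG : IsCocktailParty G block opp) {n N : ℕ}
  (hn : ∀ j, Nat.card {v // block v = some j} = n)
include hG hn

theorem card_not_eq_or_adj_le (x : V) :
    ({y | ¬(y = x ∨ G.Adj x y)} : Finset V).card ≤ n := by
  rcases hx : block x with _ | j
  · simp [hG.eq_or_adj_iff, hx]
  · simp [hG.eq_or_adj_iff, hx, ← hn (opp j), Fintype.card_subtype]

theorem connected (hcard : 2 * n < Fintype.card V) : G.Connected := by
  have hcommon (x y : V) : ∃ z, (z = x ∨ G.Adj x z) ∧ (z = y ∨ G.Adj y z) := by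
    by_contra! hno
    refine hcard.not_ge ?_
    calc
      Fintype.card V ≤ (({z | ¬(z = x ∨ G.Adj x z)} : Finset V) ∪
          ({z | ¬(z = y ∨ G.Adj y z)} : Finset V)).card :=
        Finset.card_le_card fun z _ => by
          by_cases hz : z = x ∨ G.Adj x z
          · simpa using Or.inr (hno z hz)
          · simpa using Or.inl (not_or.1 hz)
      _ ≤ n + n := (Finset.card_union_le _ _).trans
        (add_le_add (hG.card_not_eq_or_adj_le hn x) (hG.card_not_eq_or_adj_le hn y))
      _ = 2 * n := (two_mul n).symm
  have hreach {x z : V} (hz : z = x ∨ G.Adj x z) : G.Reachable x z :=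
    hz.elim (fun e => e ▸ .rfl) (·.reachable)
  have : Nonempty V := Fintype.card_pos_iff.1 (by omega)
  exact ⟨fun x y => let ⟨z, hx, hy⟩ := hcommon x y; (hreach hx).trans (hreach hy).symm⟩

variable [Fintype J] (hN : Nat.card {v // block v = none} = N)
include hN

theorem isGrowthRate [Nonempty J] (hn0 : 0 < n) (hcard : 2 * n < N + n * Fintype.card J)
    {b r : ℝ} (hr0 : 0 ≤ r) (hr1 : r ≤ 1)
    (hr : n * (1 + r ^ 2) = (N + n * Fintype.card J) * r)
    (hb : b * (N + n * Fintype.card J - 2 * n * r) = n) :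
    IsGrowthRate G (N + n * Fintype.card J - n * Fintype.card J * (b * (1 - r))) := by
  have hV : (Fintype.card V : ℝ) = N + n * Fintype.card J := card_eq_of_card_block hn hN
  have hconnected : G.Connected :=
    hG.connected hn (by rw [← Nat.cast_lt (α := ℝ), hV]; exact_mod_cast hcard)
  have hpos : 0 < N + n * Fintype.card J - n * Fintype.card J * (b * (1 - r)) := by
    have hcard' : 2 * (n : ℝ) < N + n * Fintype.card J := by exact_mod_cast hcard
    have hn0' : (0 : ℝ) < n := by exact_mod_cast hn0
    have hJ : (0 : ℝ) < Fintype.card J := by exact_mod_cast Fintype.card_pos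
    have hlt : n * (1 - r) < N + n * Fintype.card J - 2 * n * r := by nlinarith
    have hden : 0 < N + n * Fintype.card J - 2 * n * r := by nlinarith
    have hlt_one : b * (1 - r) < 1 := by
      rwa [eq_div_of_mul_eq hden.ne' hb, div_mul_eq_mul_div, div_lt_one hden]
    have hgap : 0 < n * Fintype.card J * (1 - b * (1 - r)) :=
      mul_pos (mul_pos hn0' hJ) (sub_pos.2 hlt_one)
    linarith [(Nat.cast_nonneg N : (0 : ℝ) ≤ N)]
  refine isGrowthRate_of_potential (Φ := potential block b r) hconnected hpos
    (abs_potential_sub_sup_le hr0 hr1) fun h => ?_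
  obtain ⟨a, ha⟩ := exists_isLeader block h
  rw [Finset.sum_sub_distrib, Finset.sum_congr rfl fun v _ => hG.potential_deposit b r ha v,
    Finset.sum_add_distrib,
    sum_comp_block hn hN (potentialAfter opp b r a (lead block h)),
    sum_potentialAfter (hG.opp_ne a) hr hb]
  simp only [Finset.sum_const, Finset.card_univ, nsmul_eq_mul, hV, potential]
  ring

theorem isGrowthRate_of_two_mul_lt [Nonempty J] (hn0 : 0 < n)
    (hcard : 2 * n < N + n * Fintype.card J) {κ τ : ℝ}
    (hκ : 2 * n * κ = N + n * Fintype.card J) (hτ : τ = (√(κ ^ 2 - 1) - κ + 1)⁻¹) :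
    IsGrowthRate G (N + n * Fintype.card J -
      (n : ℝ) ^ 2 * Fintype.card J / (N + n * Fintype.card J) * (τ / (τ + 1 / (2 * κ)))) := by
  have : (0 : ℝ) < n := by exact_mod_cast hn0
  have hκ1 : 1 < κ := by
    have hcard' : 2 * (n : ℝ) < N + n * Fintype.card J := by exact_mod_cast hcard
    nlinarith
  have hs : 0 < √(κ ^ 2 - 1) := Real.sqrt_pos.2 (by nlinarith)
  convert hG.isGrowthRate hn hN hn0 hcard (b := 1 / (2 * √(κ ^ 2 - 1)))
    (sub_sqrt_sq_sub_one_nonneg (by linarith)) (sub_sqrt_sq_sub_one_lt_one hκ1).le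
    (by rw [← hκ]; linear_combination n * one_add_sub_sqrt_sq hκ1.le)
    (by rw [← hκ]; field_simp; ring) using 2
  rw [hτ, inv_sqrt_sub_div_inv_add_eq hκ1, ← hκ]
  field_simp

end IsCocktailParty

end CocktailParty

section CloneGraph

/-- The map sending `(i, j)` to the vertex `j` of which it is a clone. The dominant vertices of
`cloneGraph N n m` belong to no block. -/
def cloneBlock {N n m : ℕ} : (Fin n × Fin m) ⊕ Fin N → Option (Fin m)
  | .inl (_, j) => some j
  | .inr _ => none

/-- The vertex `j + m / 2` modulo `m`, which is the one not adjacent to `j` in the cocktail party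
graph. -/
def antipode {m : ℕ} (j : Fin m) : Fin m :=
  ⟨(j + m / 2) % m, Nat.mod_lt _ j.pos⟩

variable {N n m : ℕ}

theorem val_antipode (hm : Even m) (j : Fin m) :
    (antipode j : ℕ) = if (j : ℕ) < m / 2 then j + m / 2 else j - m / 2 := by
  obtain ⟨k, rfl⟩ := hm
  have hj := j.isLt
  simp only [antipode]
  split_ifs with h
  · rw [Nat.mod_eq_of_lt (by omega)]
  · rw [Nat.mod_eq_sub_mod (by omega), Nat.mod_eq_of_lt (by omega)]
    omega

theorem antipode_ne (hm : Even m) (j : Fin m) : antipode j ≠ j := by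
  rw [Ne, Fin.ext_iff, val_antipode hm]
  obtain ⟨k, rfl⟩ := hm
  have hj := j.isLt
  split_ifs <;> omega

theorem antipode_involutive (hm : Even m) : Function.Involutive (antipode (m := m)) := by
  intro j
  rw [Fin.ext_iff, val_antipode hm, val_antipode hm]
  obtain ⟨k, rfl⟩ := hm
  have hj := j.isLt
  split_ifs <;> omega

theorem isCocktailParty_cloneGraph (hm : Even m) :
    IsCocktailParty (cloneGraph N n m) cloneBlock antipode where
  involutive := antipode_involutive hm
  opp_ne := antipode_ne hm
  eq_or_adj_iff x y := by
    have hmod (a b : Fin m) : (b : ℕ) % m = (a + m / 2) % m ↔ b = antipode a := by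
      rw [Nat.mod_eq_of_lt b.isLt, Fin.ext_iff, antipode]
    have hsymm (a b : Fin m) : a = antipode b ↔ b = antipode a :=
      eq_comm.trans (antipode_involutive hm).eq_iff
    rcases x with ⟨i, a⟩ | x <;> rcases y with ⟨i', b⟩ | y
    · have hopp := antipode_ne hm a
      simp only [cloneGraph, SimpleGraph.fromRel_adj, hmod, hsymm a b, cloneBlock, or_self]
      grind
    · simp [cloneGraph, cloneBlock]
    · simp [cloneGraph, cloneBlock]
    · simp [cloneGraph, cloneBlock, eq_comm, em]

theorem card_cloneBlock_eq_some (j : Fin m) :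
    Nat.card {v : (Fin n × Fin m) ⊕ Fin N // cloneBlock v = some j} = n := by
  have hrange : {v : (Fin n × Fin m) ⊕ Fin N | cloneBlock v = some j} =
      Set.range fun i => .inl (i, j) := by
    ext (⟨i, j'⟩ | x) <;> simp [cloneBlock, eq_comm]
  have hinj : (fun i : Fin n => (.inl (i, j) : (Fin n × Fin m) ⊕ Fin N)).Injective :=
    fun i i' h => by simpa using h
  exact (congrArg Set.ncard hrange).trans
    ((Set.ncard_range_of_injective hinj).trans (Nat.card_fin n))

theorem card_cloneBlock_eq_none :
    Nat.card {v : (Fin n × Fin m) ⊕ Fin N // cloneBlock v = none} = N := by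
  have hrange : {v : (Fin n × Fin m) ⊕ Fin N | cloneBlock v = none} = Set.range .inr := by
    ext (⟨i, j⟩ | x) <;> simp [cloneBlock]
  exact (congrArg Set.ncard hrange).trans
    ((Set.ncard_range_of_injective Sum.inr_injective).trans (Nat.card_fin N))

end CloneGraph

theorem stmt1 (N n m : ℕ) (hn : 1 ≤ n) (hm : 2 ≤ m) (hme : Even m) (hN : m = 2 → 1 ≤ N) :
    IsGrowthRate (cloneGraph N n m)
      ((N + n * m : ℝ) -
        ((n : ℝ) ^ 2 * m / (N + n * m : ℝ)) *
          ((Real.sqrt (((N + n * m : ℝ) / (2 * n)) ^ 2 - 1) - (N + n * m : ℝ) / (2 * n) + 1)⁻¹ /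
            ((Real.sqrt (((N + n * m : ℝ) / (2 * n)) ^ 2 - 1) - (N + n * m : ℝ) / (2 * n) + 1)⁻¹ +
              1 / (2 * ((N + n * m : ℝ) / (2 * n)))))) := by
  have hcard : 2 * n < N + n * Fintype.card (Fin m) := by
    rw [Fintype.card_fin]
    rcases hm.eq_or_lt with rfl | hm
    · linarith [hN rfl]
    · nlinarith
  have : Nonempty (Fin m) := ⟨⟨0, by omega⟩⟩
  have hn' : (n : ℝ) ≠ 0 := by positivity
  simpa only [Fintype.card_fin] using (isCocktailParty_cloneGraph hme).isGrowthRate_of_two_mul_lt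
    card_cloneBlock_eq_some card_cloneBlock_eq_none hn hcard
    (by rw [Fintype.card_fin]; field_simp) rfl
end
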